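/- arXiv:1606.00323 — 5 statements merged into one kernel-verified Lean document; each statement's English description precedes it below -/
import Mathlib

section
/- For every integer g ≥ 2 there are only finitely many isomorphism classes of stable weighted graphs of genus g. -/
/-- A finite multigraph: finite vertex and edge types, each edge carrying a source and a
target vertex (this is an auxiliary orientation); loops and parallel edges are allowed. -/
structure Multigraph where
  V : Type
  E : Type
  [fV : Fintype V]
  [fE : Fintype E]
  [dV : DecidableEq V]
  [dE : DecidableEq E]
  s : E → V
  t : E → V

attribute [instance] Multigraph.fV Multigraph.fE Multigraph.dV Multigraph.dE

namespace Multigraph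

variable (G : Multigraph)

/-- Two vertices are adjacent if some edge joins them. -/
def Adj (a b : G.V) : Prop :=
  ∃ e : G.E, (G.s e = a ∧ G.t e = b) ∨ (G.s e = b ∧ G.t e = a)

/-- A multigraph is connected if it is nonempty and any two vertices are joined by a walk. -/
def Connected : Prop :=
  Nonempty G.V ∧ ∀ a b : G.V, Relation.ReflTransGen G.Adj a b

/-- The graph obtained by deleting the edges in `F` is connected. -/
def ConnectedAvoiding (F : Set G.E) : Prop :=
  ∀ a b : G.V, Relation.ReflTransGen
    (fun x y => ∃ e : G.E, e ∉ F ∧ ((G.s e = x ∧ G.t e = y) ∨ (G.s e = y ∧ G.t e = x))) a b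

/-- The valency of a vertex: the number of half-edges at it (a loop counts twice). -/
def val (v : G.V) : ℕ :=
  (Finset.univ.filter (fun e => G.s e = v)).card + (Finset.univ.filter (fun e => G.t e = v)).card

/-- The number of loops based at a vertex. -/
def loops (v : G.V) : ℕ :=
  (Finset.univ.filter (fun e => G.s e = v ∧ G.t e = v)).card

/-- The number of edges joining two vertices. -/
def edgesBetween (v w : G.V) : ℕ :=
  (Finset.univ.filter (fun e => (G.s e = v ∧ G.t e = w) ∨ (G.s e = w ∧ G.t e = v))).card

/-- The first Betti number `b₁(G) = |E| - |V| + 1` (of a connected graph). -/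
def b1 : ℤ := (Fintype.card G.E : ℤ) - (Fintype.card G.V : ℤ) + 1

/-- The boundary map `∂ : C₁(G,ℤ) → C₀(G,ℤ)`, sending an edge `e` to `t e - s e`. -/
def boundaryHom : (G.E → ℤ) →+ (G.V → ℤ) where
  toFun c := fun v =>
    ∑ e : G.E, c e * ((if G.t e = v then 1 else 0) - (if G.s e = v then 1 else 0))
  map_zero' := by funext v; simp
  map_add' a b := by
    funext v
    simp [Pi.add_apply, add_mul, Finset.sum_add_distrib]

/-- The coboundary map `δ : C₀(G,ℤ) → C₁(G,ℤ)`. -/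
def coboundaryHom : (G.V → ℤ) →+ (G.E → ℤ) where
  toFun f := fun e => f (G.t e) - f (G.s e)
  map_zero' := by funext e; simp
  map_add' a b := by funext e; simp only [Pi.add_apply]; ring

/-- The cycle space `H₁(G,ℤ)`, i.e. the kernel of the boundary map. -/
def cycleSpace : AddSubgroup (G.E → ℤ) := (G.boundaryHom).ker

/-- `C` is the edge set of a closed walk with no repeated vertices except the
initial/terminal one (so a loop is a cycle). -/
def IsCycle (C : Finset G.E) : Prop :=
  ∃ n : ℕ, 0 < n ∧ ∃ (e : Fin n → G.E) (v : Fin (n + 1) → G.V),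
    Function.Injective e ∧
    (∀ i : Fin n, (G.s (e i) = v i.castSucc ∧ G.t (e i) = v i.succ) ∨
        (G.s (e i) = v i.succ ∧ G.t (e i) = v i.castSucc)) ∧
    v 0 = v (Fin.last n) ∧
    (∀ i j : Fin (n + 1), v i = v j →
        i = j ∨ (i = 0 ∧ j = Fin.last n) ∨ (i = Fin.last n ∧ j = 0)) ∧
    C = Finset.image e Finset.univ

/-- A bridge (separating edge) is an edge contained in no cycle. -/
def IsBridge (e : G.E) : Prop := ∀ C : Finset G.E, G.IsCycle C → e ∉ C

def Bridgeless : Prop := ∀ e : G.E, ¬ G.IsBridge e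

/-- `e₁ ∼ e₂` iff every cycle containing `e₁` contains `e₂` and conversely. -/
def Sim (e₁ e₂ : G.E) : Prop :=
  ∀ C : Finset G.E, G.IsCycle C → (e₁ ∈ C ↔ e₂ ∈ C)

/-- The C1-sets: the equivalence classes of the relation `Sim`. -/
def IsC1Set (S : Set G.E) : Prop := ∃ e : G.E, S = {e' | G.Sim e e'}

/-- The multigraph obtained by contracting every edge in `F` (a contracted loop is
simply deleted). -/
noncomputable def contractSet (F : Set G.E) : Multigraph :=
  letI : DecidableEq (Quot (fun a b : G.V => ∃ e ∈ F, G.s e = a ∧ G.t e = b)) :=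
    Classical.decEq _
  { V := Quot (fun a b : G.V => ∃ e ∈ F, G.s e = a ∧ G.t e = b)
    E := {e : G.E // e ∉ F}
    fV := Fintype.ofSurjective (Quot.mk _) (fun q => Quot.exists_rep q)
    fE := Fintype.ofInjective (Subtype.val) Subtype.val_injective
    dV := inferInstance
    dE := inferInstance
    s := fun e => Quot.mk _ (G.s e.1)
    t := fun e => Quot.mk _ (G.t e.1) }

/-- `G^(2)`: the multigraph obtained from `G` by contracting every bridge. -/
noncomputable def contractBridges : Multigraph := G.contractSet {e | G.IsBridge e}

/-- An isomorphism of multigraphs. -/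
structure Iso (G₁ G₂ : Multigraph) where
  vEquiv : G₁.V ≃ G₂.V
  eEquiv : G₁.E ≃ G₂.E
  endpoints : ∀ e : G₁.E,
    (G₂.s (eEquiv e) = vEquiv (G₁.s e) ∧ G₂.t (eEquiv e) = vEquiv (G₁.t e)) ∨
    (G₂.s (eEquiv e) = vEquiv (G₁.t e) ∧ G₂.t (eEquiv e) = vEquiv (G₁.s e))

/-- The group of degree-zero divisors `Div⁰(G)`. -/
def Div0 : AddSubgroup (G.V → ℤ) where
  carrier := {D : G.V → ℤ | ∑ v : G.V, D v = 0}
  zero_mem' := by simp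
  add_mem' := by
    intro a b ha hb
    simp only [Set.mem_setOf_eq, Pi.add_apply] at *
    simp [Finset.sum_add_distrib, ha, hb]
  neg_mem' := by
    intro a ha
    simp only [Set.mem_setOf_eq, Pi.neg_apply] at *
    simp [ha]

/-- The principal divisor `div(f_v)` associated to a vertex `v`. -/
def prinDiv (v : G.V) : G.V → ℤ :=
  fun u => if u = v then 2 * (G.loops v : ℤ) - (G.val v : ℤ) else (G.edgesBetween v u : ℤ)

/-- The group of principal divisors `Prin(G)`. -/
def Prin : AddSubgroup (G.V → ℤ) := AddSubgroup.closure (Set.range G.prinDiv)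

end Multigraph

/-- `Jac(G₁) ≅ Jac(G₂)`: a ℤ-linear isomorphism of the cycle lattices preserving the
bilinear forms for which the edges are orthonormal. -/
def JacIsoGraph (G₁ G₂ : Multigraph) : Prop :=
  ∃ φ : G₁.cycleSpace ≃+ G₂.cycleSpace,
    ∀ x y : G₁.cycleSpace,
      (∑ e : G₂.E, ((φ x : G₂.E → ℤ) e) * ((φ y : G₂.E → ℤ) e)) =
      ∑ e : G₁.E, ((x : G₁.E → ℤ) e) * ((y : G₁.E → ℤ) e)

/-- Cyclic equivalence of two multigraphs: a bijection of the edge sets, together with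
signs, inducing an isomorphism of the cycle spaces. -/
def CyclicallyEquivalent (G₁ G₂ : Multigraph) : Prop :=
  ∃ (σ : G₁.E ≃ G₂.E) (ε : G₁.E → ℤ),
    (∀ e, ε e = 1 ∨ ε e = -1) ∧
    ((fun x : G₁.E → ℤ => fun e₂ : G₂.E => ε (σ.symm e₂) * x (σ.symm e₂)) ''
        (G₁.cycleSpace : Set (G₁.E → ℤ))) = (G₂.cycleSpace : Set (G₂.E → ℤ))

/-- Cyclic equivalence of metric graphs: as for graphs, with a length-preserving bijection
of the edge sets. -/
def MetricCycEquiv (G₁ : Multigraph) (ℓ₁ : G₁.E → ℝ) (G₂ : Multigraph) (ℓ₂ : G₂.E → ℝ) : Prop :=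
  ∃ (σ : G₁.E ≃ G₂.E) (ε : G₁.E → ℤ),
    (∀ e, ℓ₂ (σ e) = ℓ₁ e) ∧
    (∀ e, ε e = 1 ∨ ε e = -1) ∧
    ((fun x : G₁.E → ℤ => fun e₂ : G₂.E => ε (σ.symm e₂) * x (σ.symm e₂)) ''
        (G₁.cycleSpace : Set (G₁.E → ℤ))) = (G₂.cycleSpace : Set (G₂.E → ℤ))

/-- `c` chooses one representative edge in each C1-set (i.e. in each `Sim`-class). -/
def IsC1Choice (H : Multigraph) (c : H.E → H.E) : Prop :=
  (∀ e, H.Sim e (c e)) ∧ ∀ e e' : H.E, H.Sim e e' → c e = c e'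

/-- The graph `G^(3)` obtained by contracting, in each C1-set, all edges except the
chosen one. -/
noncomputable def threeGraph (H : Multigraph) (c : H.E → H.E) : Multigraph :=
  H.contractSet {e | c e ≠ e}

/-- The length function on `G^(3)`: a surviving edge gets the total length of its C1-set. -/
noncomputable def threeLength (H : Multigraph) (ℓ : H.E → ℝ) (c : H.E → H.E) :
    (threeGraph H c).E → ℝ :=
  fun e => ∑ e' ∈ Finset.univ.filter (fun e' => c e' = e.1), ℓ e'

/-- A weighted graph: a multigraph with a weight function on the vertices. -/
structure WeightedGraph where
  G : Multigraph
  w : G.V → ℕ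

namespace WeightedGraph

/-- The genus `g(G,w) = b₁(G) + Σ_v w(v)`. -/
def genus (X : WeightedGraph) : ℤ := X.G.b1 + ∑ v : X.G.V, (X.w v : ℤ)

/-- A weighted graph is stable if it is connected, has genus at least 2, and every
vertex of weight zero has valency at least 3. -/
def Stable (X : WeightedGraph) : Prop :=
  X.G.Connected ∧ 2 ≤ X.genus ∧ ∀ v : X.G.V, X.w v = 0 → 3 ≤ X.G.val v

/-- An isomorphism of weighted graphs. -/
structure Iso (X Y : WeightedGraph) where
  vEquiv : X.G.V ≃ Y.G.V
  eEquiv : X.G.E ≃ Y.G.E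
  endpoints : ∀ e : X.G.E,
    (Y.G.s (eEquiv e) = vEquiv (X.G.s e) ∧ Y.G.t (eEquiv e) = vEquiv (X.G.t e)) ∨
    (Y.G.s (eEquiv e) = vEquiv (X.G.t e) ∧ Y.G.t (eEquiv e) = vEquiv (X.G.s e))
  weight_eq : ∀ v : X.G.V, Y.w (vEquiv v) = X.w v

/-- Contraction of a single edge of a weighted graph: a non-loop edge is contracted by
identifying its two endpoints, the new vertex receiving the sum of the two weights;
a loop is deleted, the weight of its base vertex increasing by 1. -/
noncomputable def contract (X : WeightedGraph) (e₀ : X.G.E) : WeightedGraph :=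
  letI : DecidableEq (Quot (fun a b : X.G.V => a = X.G.s e₀ ∧ b = X.G.t e₀)) :=
    Classical.decEq _
  { G := { V := Quot (fun a b : X.G.V => a = X.G.s e₀ ∧ b = X.G.t e₀)
           E := {e : X.G.E // e ≠ e₀}
           fV := Fintype.ofSurjective (Quot.mk _) (fun q => Quot.exists_rep q)
           fE := inferInstance
           dV := inferInstance
           dE := inferInstance
           s := fun e => Quot.mk _ (X.G.s e.1)
           t := fun e => Quot.mk _ (X.G.t e.1) }
    w := fun q =>
      (∑ v ∈ Finset.univ.filter
          (fun v => Quot.mk (fun a b : X.G.V => a = X.G.s e₀ ∧ b = X.G.t e₀) v = q), X.w v) +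
      (if X.G.s e₀ = X.G.t e₀ ∧
          Quot.mk (fun a b : X.G.V => a = X.G.s e₀ ∧ b = X.G.t e₀) (X.G.s e₀) = q
       then 1 else 0) }

/-- One step: `Y` is (isomorphic to) the contraction of a single edge of `X`. -/
def ContractStep (X Y : WeightedGraph) : Prop :=
  ∃ e : X.G.E, Nonempty ((X.contract e).Iso Y)

/-- `X.ContractsTo Y`: `Y` is obtained from `X` by contracting finitely many edges. -/
def ContractsTo : WeightedGraph → WeightedGraph → Prop :=
  Relation.ReflTransGen ContractStep

/-- A sequence of exactly `n` loop contractions from `X` ending at (a graph isomorphic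
to) `Y`. -/
def LoopContractSeq : ℕ → WeightedGraph → WeightedGraph → Prop
  | 0, X, Y => Nonempty (X.Iso Y)
  | n + 1, X, Y => ∃ e : X.G.E, X.G.s e = X.G.t e ∧ LoopContractSeq n (X.contract e) Y

/-- The weightless graph `G''` obtained by replacing each vertex `v` of positive weight
with a weight-zero vertex carrying `w v` new loops. -/
def blowUp (X : WeightedGraph) : WeightedGraph where
  G := { V := X.G.V
         E := X.G.E ⊕ (Σ v : X.G.V, Fin (X.w v))
         fV := inferInstance
         fE := inferInstance
         dV := inferInstance
         dE := inferInstance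
         s := Sum.elim X.G.s (fun p => p.1)
         t := Sum.elim X.G.t (fun p => p.1) }
  w := fun _ => 0

def totalWeight (X : WeightedGraph) : ℕ := ∑ v : X.G.V, X.w v

/-- The lattice `Λ = H₁(G,ℤ) ⊕ ℤ^(g - b₁(G))` underlying the Jacobian torus of a
weighted graph. -/
abbrev JacLattice (X : WeightedGraph) : Type :=
  ↥X.G.cycleSpace × (Fin X.totalWeight → ℤ)

/-- The bilinear form on the Jacobian lattice: on `H₁(G,ℤ)` the edges are orthonormal,
and the form vanishes on the extra summand. -/
def jacForm (X : WeightedGraph) (p q : X.JacLattice) : ℤ :=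
  ∑ e : X.G.E, (p.1 : X.G.E → ℤ) e * (q.1 : X.G.E → ℤ) e

end WeightedGraph

/-- A pure tropical curve: a multigraph with positive edge lengths. -/
structure PureTropicalCurve where
  G : Multigraph
  ℓ : G.E → ℝ
  pos : ∀ e, 0 < ℓ e

/-- A (weighted) tropical curve: a multigraph with vertex weights and positive edge
lengths. -/
structure TropicalCurve where
  G : Multigraph
  w : G.V → ℕ
  ℓ : G.E → ℝ
  pos : ∀ e, 0 < ℓ e

namespace TropicalCurve

def totalWeight (Γ : TropicalCurve) : ℕ := ∑ v : Γ.G.V, Γ.w v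

/-- The lattice `Λ = H₁(G,ℤ) ⊕ ℤ^(g - b₁(G))` underlying `Jac(Γ)`. -/
abbrev JacLattice (Γ : TropicalCurve) : Type :=
  ↥Γ.G.cycleSpace × (Fin Γ.totalWeight → ℤ)

/-- The bilinear form `( , )_ℓ` on the Jacobian lattice, vanishing on the extra
summand. -/
noncomputable def jacForm (Γ : TropicalCurve) (p q : Γ.JacLattice) : ℝ :=
  ∑ e : Γ.G.E, Γ.ℓ e * ((p.1 : Γ.G.E → ℤ) e : ℝ) * ((q.1 : Γ.G.E → ℤ) e : ℝ)

end TropicalCurve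

/-- `Jac(Γ₁) ≅ Jac(Γ₂)`: a ℤ-linear isomorphism of the lattices preserving the bilinear
forms. -/
def TropJacIso (Γ₁ Γ₂ : TropicalCurve) : Prop :=
  ∃ φ : Γ₁.JacLattice ≃+ Γ₂.JacLattice,
    ∀ p q : Γ₁.JacLattice, Γ₂.jacForm (φ p) (φ q) = Γ₁.jacForm p q

namespace Multigraph

theorem sum_val (G : Multigraph) : ∑ v : G.V, G.val v = 2 * Fintype.card G.E := by
  simp only [val, Finset.sum_add_distrib]
  rw [← Finset.card_eq_sum_card_fiberwise (fun _ _ => Finset.mem_univ _),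
    ← Finset.card_eq_sum_card_fiberwise (fun _ _ => Finset.mem_univ _), Finset.card_univ]
  ring

theorem Connected.val_pos {G : Multigraph} (hG : G.Connected) [Nontrivial G.V] (v : G.V) :
    0 < G.val v := by
  obtain ⟨u, hu⟩ := exists_ne v
  obtain h | ⟨x, ⟨e, he⟩, -⟩ := (hG.2 v u).cases_head
  · exact absurd h.symm hu
  · rcases he with he | he
    · exact Nat.add_pos_left (Finset.card_pos.2 ⟨e, by simp [he.1]⟩) _
    · exact Nat.add_pos_right _ (Finset.card_pos.2 ⟨e, by simp [he.2]⟩)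

end Multigraph

namespace WeightedGraph

/-- A stable weighted graph of genus `g` has at most `2 * g - 2` vertices. -/
theorem Stable.card_vertices_le {X : WeightedGraph} (hX : X.Stable) :
    (Fintype.card X.G.V : ℤ) ≤ 2 * X.genus - 2 := by
  obtain ⟨hconn, hgenus, hval⟩ := hX
  rcases subsingleton_or_nontrivial X.G.V with hV | hV
  · have := Fintype.card_le_one_iff_subsingleton.2 hV
    omega
  · have hlocal : ∀ v ∈ Finset.univ, 3 ≤ X.G.val v + 2 * X.w v := fun v _ => by
      have := hconn.val_pos v
      have := hval v
      omega
    have hsum := Finset.card_nsmul_le_sum _ _ 3 hlocal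
    rw [Finset.sum_add_distrib, X.G.sum_val, ← Finset.mul_sum, Finset.card_univ,
      smul_eq_mul] at hsum
    simp only [genus, Multigraph.b1]
    zify at hsum
    linarith

/-- The weighted graph on the vertices `Fin n` and edges `Fin m` with given endpoints and
bounded weights. -/
def ofFin (N : ℕ) (p : Σ n : Fin N, Σ m : Fin N,
    (Fin m → Fin n) × (Fin m → Fin n) × (Fin n → Fin N)) : WeightedGraph where
  G := { V := Fin p.1, E := Fin p.2.1, s := p.2.2.1, t := p.2.2.2.1 }
  w := fun v => p.2.2.2.2 v

/-- A weighted graph with fewer than `N` vertices, fewer than `N` edges and all weights less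
than `N` is isomorphic to one on standard finite types. -/
theorem exists_iso_ofFin (X : WeightedGraph) {N : ℕ} (hV : Fintype.card X.G.V < N)
    (hE : Fintype.card X.G.E < N) (hw : ∀ v, X.w v < N) :
    ∃ p, Nonempty (X.Iso (ofFin N p)) := by
  let φ := Fintype.equivFin X.G.V
  let ψ := Fintype.equivFin X.G.E
  refine ⟨⟨⟨_, hV⟩, ⟨_, hE⟩, fun e => φ (X.G.s (ψ.symm e)), fun e => φ (X.G.t (ψ.symm e)),
    fun v => ⟨X.w (φ.symm v), hw _⟩⟩, ⟨φ, ψ, fun e => Or.inl ?_, fun v => ?_⟩⟩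
  · exact ⟨congrArg (fun e => φ (X.G.s e)) (ψ.symm_apply_apply e),
      congrArg (fun e => φ (X.G.t e)) (ψ.symm_apply_apply e)⟩
  · exact congrArg X.w (φ.symm_apply_apply v)

end WeightedGraph

/-- For every integer `g ≥ 2` there are only finitely many isomorphism
classes of stable weighted graphs of genus `g`. -/
theorem finitely_many_stable_weighted_graphs (g : ℤ) (hg : 2 ≤ g) :
    ∃ L : List WeightedGraph, ∀ X : WeightedGraph,
      X.Stable → X.genus = g → ∃ Y ∈ L, Nonempty (X.Iso Y) := by
  obtain ⟨N, hN⟩ : ∃ N : ℕ, 3 * g - 3 < N := ⟨(3 * g).toNat, by omega⟩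
  refine ⟨Finset.univ.toList.map (WeightedGraph.ofFin N), fun X hX hgenus => ?_⟩
  have hcard := hX.card_vertices_le
  have hweight : ∀ v, (X.w v : ℤ) ≤ ∑ v : X.G.V, (X.w v : ℤ) := fun v =>
    Finset.single_le_sum (f := fun v => (X.w v : ℤ)) (fun _ _ => by positivity)
      (Finset.mem_univ v)
  have hsum : (0 : ℤ) ≤ ∑ v : X.G.V, (X.w v : ℤ) := by positivity
  rw [hgenus] at hcard
  simp only [WeightedGraph.genus, Multigraph.b1] at hgenus
  obtain ⟨p, hp⟩ := X.exists_iso_ofFin (N := N) (by omega) (by omega)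
    (fun v => by have := hweight v; omega)
  exact ⟨_, List.mem_map_of_mem (Finset.mem_toList.2 (Finset.mem_univ p)), hp⟩
end

section
/- Let G be a finite connected multigraph of genus g ≥ 2 in which every vertex has valency ≥ 3, and let v be a vertex of valency N ≥ 4. Then there exists a finite connected multigraph G' of genus g with |E(G')| = |E(G)| + 1, in which every vertex has valency ≥ 3, together with a non-loop edge e of G' whose contraction yields a graph isomorphic to G, such that the two endpoints of e have valencies ⌊N/2⌋ + 1 and ⌈N/2⌉ + 1, both strictly less than N. -/
namespace Multigraph

/-- Splitting the vertex `v`: a new vertex `none` is joined to `v` by a new edge `none`, and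
takes over the sources of the edges in `A` and the targets of the edges in `B`. -/
def split (G : Multigraph) (v : G.V) (A B : Finset G.E) : Multigraph where
  V := Option G.V
  E := Option G.E
  s := fun e => e.elim (some v) fun e => if e ∈ A then none else some (G.s e)
  t := fun e => e.elim none fun e => if e ∈ B then none else some (G.t e)

section Split

variable {G : Multigraph} {v : G.V} {A B : Finset G.E}

theorem Adj.symm {a b : G.V} (h : G.Adj a b) : G.Adj b a := by
  obtain ⟨e, h⟩ := h
  exact ⟨e, h.symm⟩

theorem reachable_symm {a b : G.V} (h : Relation.ReflTransGen G.Adj a b) :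
    Relation.ReflTransGen G.Adj b a :=
  have : Std.Symm G.Adj := ⟨fun _ _ => Adj.symm⟩
  symm_of (Relation.ReflTransGen G.Adj) h

theorem split_reachable_getD (x : (G.split v A B).V) :
    Relation.ReflTransGen (G.split v A B).Adj x (some (Option.getD x v)) := by
  cases x with
  | none => exact .single ⟨(none : Option G.E), .inr ⟨rfl, rfl⟩⟩
  | some u => exact .refl

theorem split_getD_s (hA : ∀ e ∈ A, G.s e = v) (e : G.E) :
    Option.getD ((G.split v A B).s (some e)) v = G.s e := by
  change Option.getD (if e ∈ A then none else some (G.s e)) v = G.s e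
  split_ifs with h
  · exact (hA e h).symm
  · rfl

theorem split_getD_t (hB : ∀ e ∈ B, G.t e = v) (e : G.E) :
    Option.getD ((G.split v A B).t (some e)) v = G.t e := by
  change Option.getD (if e ∈ B then none else some (G.t e)) v = G.t e
  split_ifs with h
  · exact (hB e h).symm
  · rfl

theorem split_connected (hA : ∀ e ∈ A, G.s e = v) (hB : ∀ e ∈ B, G.t e = v)
    (hconn : G.Connected) : (G.split v A B).Connected := by
  have edge (e : G.E) : Relation.ReflTransGen (G.split v A B).Adj
      (some (G.s e)) (some (G.t e)) := by
    have hs := split_reachable_getD ((G.split v A B).s (some e))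
    have ht := split_reachable_getD ((G.split v A B).t (some e))
    rw [split_getD_s hA] at hs
    rw [split_getD_t hB] at ht
    exact (reachable_symm hs).trans (.head ⟨some e, .inl ⟨rfl, rfl⟩⟩ ht)
  have lift (a b : G.V) : Relation.ReflTransGen (G.split v A B).Adj (some a) (some b) := by
    induction hconn.2 a b with
    | refl => exact .refl
    | tail _ h ih =>
      obtain ⟨e, ⟨rfl, rfl⟩ | ⟨rfl, rfl⟩⟩ := h
      · exact ih.trans (edge e)
      · exact ih.trans (reachable_symm (edge e))
  exact ⟨⟨(none : Option G.V)⟩, fun a b =>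
    ((split_reachable_getD a).trans (lift _ _)).trans (reachable_symm (split_reachable_getD b))⟩

theorem split_b1 : (G.split v A B).b1 = G.b1 := by
  have hV : Fintype.card (G.split v A B).V = Fintype.card G.V + 1 := Fintype.card_option
  have hE : Fintype.card (G.split v A B).E = Fintype.card G.E + 1 := Fintype.card_option
  simp only [b1, hV, hE]
  push_cast
  ring

theorem card_filter_option {α : Type*} [Fintype α] (p : Option α → Prop) [DecidablePred p] :
    (Finset.univ.filter p).card =
      (if p none then 1 else 0) + (Finset.univ.filter fun a => p (some a)).card := by
  simp only [Finset.card_filter, Fintype.sum_option]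

theorem split_val (x : Option G.V) : (G.split v A B).val x =
    ((if some v = x then 1 else 0) +
      (Finset.univ.filter fun e => (if e ∈ A then none else some (G.s e)) = x).card) +
    ((if none = x then 1 else 0) +
      (Finset.univ.filter fun e => (if e ∈ B then none else some (G.t e)) = x).card) :=
  congrArg₂ (· + ·)
    (card_filter_option fun e : Option G.E =>
      (e.elim (some v) fun e => if e ∈ A then none else some (G.s e)) = x)
    (card_filter_option fun e : Option G.E =>
      (e.elim none fun e => if e ∈ B then none else some (G.t e)) = x)

theorem split_val_none : (G.split v A B).val (none : Option G.V) = A.card + B.card + 1 := by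
  rw [split_val]
  simp
  ring

theorem card_filter_ite_add_card {α β : Type*} [Fintype α] [DecidableEq α] [DecidableEq β]
    {f : α → β} {b : β} {S : Finset α} (hS : ∀ a ∈ S, f a = b) :
    (Finset.univ.filter fun a => (if a ∈ S then none else some (f a)) = some b).card + S.card =
      (Finset.univ.filter fun a => f a = b).card := by
  rw [← Finset.card_sdiff_add_card_eq_card (s := S)
    (t := Finset.univ.filter fun a => f a = b) (fun a ha => by simpa using hS a ha)]
  congr 2
  ext a
  simp [and_comm]

theorem filter_ite_of_ne {α β : Type*} [Fintype α] [DecidableEq α] [DecidableEq β]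
    {f : α → β} {b c : β} {S : Finset α} (hS : ∀ a ∈ S, f a = b) (hc : c ≠ b) :
    (Finset.univ.filter fun a => (if a ∈ S then none else some (f a)) = some c) =
      Finset.univ.filter fun a => f a = c := by
  ext a
  have := hS a
  simp only [Finset.mem_filter, Finset.mem_univ, true_and]
  grind

theorem split_val_self (hA : ∀ e ∈ A, G.s e = v) (hB : ∀ e ∈ B, G.t e = v) :
    (G.split v A B).val (some v) + (A.card + B.card) = G.val v + 1 := by
  have hs := card_filter_ite_add_card hA
  have ht := card_filter_ite_add_card hB
  rw [split_val, if_pos rfl, if_neg (Option.some_ne_none v).symm, val]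
  omega

theorem split_val_of_ne (hA : ∀ e ∈ A, G.s e = v) (hB : ∀ e ∈ B, G.t e = v) {u : G.V}
    (hu : u ≠ v) : (G.split v A B).val (some u) = G.val u := by
  rw [split_val, filter_ite_of_ne hA hu, filter_ite_of_ne hB hu,
    if_neg (by simpa using hu.symm), if_neg (Option.some_ne_none u).symm, zero_add, zero_add, val]

/-- Contracting the new edge of a split graph gives back the original graph. -/
def splitContractIso (hA : ∀ e ∈ A, G.s e = v) (hB : ∀ e ∈ B, G.t e = v) :
    ((G.split v A B).contractSet {(none : Option G.E)}).Iso G where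
  vEquiv :=
    { toFun := Quot.lift (fun x : Option G.V => x.getD v) (by
        rintro _ _ ⟨_, rfl, rfl, rfl⟩
        rfl)
      invFun := fun a => Quot.mk _ (some a)
      left_inv := by
        rintro ⟨_ | u⟩
        · exact Quot.sound ⟨(none : Option G.E), rfl, rfl, rfl⟩
        · rfl
      right_inv := fun _ => rfl }
  eEquiv :=
    { toFun := fun e => Option.get (α := G.E) e.1 (Option.isSome_iff_ne_none.2 e.2)
      invFun := fun e => ⟨some e, fun h => Option.some_ne_none e h⟩
      left_inv := fun e => Subtype.ext (Option.some_get _)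
      right_inv := fun _ => rfl }
  endpoints := by
    rintro ⟨_ | e, he⟩
    · exact absurd rfl he
    · exact .inl ⟨(split_getD_s hA e).symm, (split_getD_t hB e).symm⟩

/-- Any number of half-edges up to the valency can be selected at a vertex. -/
theorem exists_halfEdges (v : G.V) {k : ℕ} (hk : k ≤ G.val v) :
    ∃ A B : Finset G.E, (∀ e ∈ A, G.s e = v) ∧ (∀ e ∈ B, G.t e = v) ∧ A.card + B.card = k := by
  simp only [val] at hk
  obtain ⟨A, hA, hAc⟩ := Finset.exists_subset_card_eq
    (s := Finset.univ.filter fun e => G.s e = v) (min_le_right k _)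
  obtain ⟨B, hB, hBc⟩ := Finset.exists_subset_card_eq
    (s := Finset.univ.filter fun e => G.t e = v) (n := k - A.card) (by omega)
  exact ⟨A, B, fun e he => (Finset.mem_filter.1 (hA he)).2,
    fun e he => (Finset.mem_filter.1 (hB he)).2, by omega⟩

end Split

end Multigraph

/-- In a connected multigraph of genus `g ≥ 2` with all valencies `≥ 3`,
a vertex `v` of valency `N ≥ 4` can be split: there is a connected multigraph `G'` of
genus `g` with one more edge, all valencies `≥ 3`, and a non-loop edge `e` whose
contraction gives back `G`, whose endpoints have valencies `⌊N/2⌋ + 1` and `⌈N/2⌉ + 1`,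
both strictly less than `N`. -/
theorem vertex_splitting (G : Multigraph) (g : ℤ) (hconn : G.Connected) (hg : 2 ≤ g)
    (hgen : G.b1 = g) (hval : ∀ u : G.V, 3 ≤ G.val u)
    (v : G.V) (N : ℕ) (hN : 4 ≤ N) (hvalv : G.val v = N) :
    ∃ G' : Multigraph, G'.Connected ∧ G'.b1 = g ∧
      Fintype.card G'.E = Fintype.card G.E + 1 ∧ (∀ u : G'.V, 3 ≤ G'.val u) ∧
      ∃ e : G'.E, G'.s e ≠ G'.t e ∧
        Nonempty ((G'.contractSet {e}).Iso G) ∧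
        G'.val (G'.s e) = N / 2 + 1 ∧ G'.val (G'.t e) = (N + 1) / 2 + 1 ∧
        G'.val (G'.s e) < N ∧ G'.val (G'.t e) < N := by
  obtain ⟨A, B, hA, hB, hAB⟩ := G.exists_halfEdges v (k := (N + 1) / 2) (by omega)
  have hnone : (G.split v A B).val (none : Option G.V) = (N + 1) / 2 + 1 := by
    rw [Multigraph.split_val_none, hAB]
  have hself : (G.split v A B).val (some v) = N / 2 + 1 := by
    have := Multigraph.split_val_self hA hB
    omega
  refine ⟨G.split v A B, Multigraph.split_connected hA hB hconn,
    Multigraph.split_b1.trans hgen, Fintype.card_option, ?_, (none : Option G.E),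
    Option.some_ne_none v, ⟨Multigraph.splitContractIso hA hB⟩, hself, hnone,
    hself.trans_lt (by omega), hnone.trans_lt (by omega)⟩
  rintro (_ | u)
  · exact le_of_le_of_eq (by omega) hnone.symm
  · by_cases hu : u = v
    · subst hu
      exact le_of_le_of_eq (by omega) hself.symm
    · exact (hval u).trans_eq (Multigraph.split_val_of_ne hA hB hu).symm
end

section
/- For every finite connected multigraph G, the Jacobian group Div⁰(G)/Prin(G) is a finite group. -/
namespace Multigraph

variable (G : Multigraph)

/-- The principal divisor of `v`, as a sum over the edges of the graph. -/
lemma prinDiv_eq_sum (v u : G.V) :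
    G.prinDiv v u = ∑ e : G.E,
      ((if G.t e = v then 1 else 0) - (if G.s e = v then 1 else 0)) *
        ((if G.s e = u then 1 else 0) - (if G.t e = u then 1 else 0) : ℤ) := by
  unfold prinDiv
  split_ifs with h
  · subst h
    simp only [loops, val, Finset.card_filter, Nat.cast_sum, Nat.cast_add, Finset.mul_sum,
      ← Finset.sum_add_distrib, ← Finset.sum_sub_distrib]
    refine Finset.sum_congr rfl fun e _ => ?_
    by_cases h₁ : G.s e = u <;> by_cases h₂ : G.t e = u <;> simp [h₁, h₂]
  · simp only [edgesBetween, Finset.card_filter, Nat.cast_sum]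
    refine Finset.sum_congr rfl fun e _ => ?_
    have h' : v ≠ u := fun k => h k.symm
    by_cases h₁ : G.s e = u <;> by_cases h₂ : G.t e = u <;> by_cases h₃ : G.s e = v <;>
      by_cases h₄ : G.t e = v <;> simp_all

/-- The principal divisor `∑ v, f v • div(f_v)` in terms of the differences of `f` along edges. -/
lemma sum_mul_prinDiv (f : G.V → ℤ) (u : G.V) :
    ∑ v, f v * G.prinDiv v u = ∑ e : G.E, (f (G.t e) - f (G.s e)) *
      ((if G.s e = u then 1 else 0) - (if G.t e = u then 1 else 0)) := by
  simp only [prinDiv_eq_sum, Finset.mul_sum]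
  rw [Finset.sum_comm]
  refine Finset.sum_congr rfl fun e _ => ?_
  simp only [← mul_assoc, ← Finset.sum_mul, mul_sub, Finset.sum_sub_distrib]
  simp

lemma sum_sum_mul_prinDiv (f : G.V → ℤ) : ∑ u, ∑ v, f v * G.prinDiv v u = 0 := by
  simp only [sum_mul_prinDiv]
  rw [Finset.sum_comm]
  simp [← Finset.mul_sum, Finset.sum_sub_distrib]

/-- The Dirichlet energy identity for the Laplacian. -/
lemma sum_mul_sum_mul_prinDiv (f : G.V → ℤ) :
    ∑ u, f u * ∑ v, f v * G.prinDiv v u = -∑ e : G.E, (f (G.t e) - f (G.s e)) ^ 2 := by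
  simp only [sum_mul_prinDiv, Finset.mul_sum]
  rw [Finset.sum_comm, ← Finset.sum_neg_distrib]
  refine Finset.sum_congr rfl fun e _ => ?_
  simp only [mul_left_comm (f _), ← Finset.mul_sum, mul_sub (f _), Finset.sum_sub_distrib]
  simp only [mul_ite, mul_one, mul_zero, Finset.sum_ite_eq, Finset.mem_univ, if_true]
  ring

variable {G}

/-- On a connected graph, functions in the kernel of the Laplacian are constant. -/
lemma Connected.eq_of_sum_mul_prinDiv_eq_zero (hG : G.Connected) {f : G.V → ℤ}
    (hf : ∀ u, ∑ v, f v * G.prinDiv v u = 0) (a b : G.V) : f a = f b := by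
  have henergy := G.sum_mul_sum_mul_prinDiv f
  simp only [hf, mul_zero, Finset.sum_const_zero] at henergy
  have hedge : ∀ e, f (G.t e) = f (G.s e) := fun e => by
    have := (Finset.sum_eq_zero_iff_of_nonneg fun e _ => sq_nonneg (f (G.t e) - f (G.s e))).1
      (by linarith) e (Finset.mem_univ e)
    exact sub_eq_zero.1 (pow_eq_zero_iff two_ne_zero |>.1 this)
  induction hG.2 a b with
  | refl => rfl
  | tail _ h ih =>
    obtain ⟨e, ⟨rfl, rfl⟩ | ⟨rfl, rfl⟩⟩ := h
    · rw [ih, hedge]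
    · rw [ih, hedge]

variable (G) in
lemma sum_mul_prinDiv_mem_Prin (f : G.V → ℤ) :
    (fun u => ∑ v, f v * G.prinDiv v u) ∈ G.Prin := by
  have : (fun u => ∑ v, f v * G.prinDiv v u) = ∑ v, f v • G.prinDiv v := by
    ext u
    simp
  rw [this]
  exact AddSubgroup.sum_mem _ fun v _ =>
    AddSubgroup.zsmul_mem _ (AddSubgroup.subset_closure (Set.mem_range_self v)) _

/-- Some nonzero integer multiplies every divisor of degree zero into the principal divisors. -/
lemma Connected.exists_smul_mem_Prin (hG : G.Connected) :
    ∃ d : ℤ, d ≠ 0 ∧ ∀ D ∈ G.Div0, d • D ∈ G.Prin := by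
  obtain ⟨q⟩ := hG.1
  -- the Laplacian perturbed by the degree, which makes it nonsingular
  let M : Matrix G.V G.V ℤ := Matrix.of fun u v => G.prinDiv v u + if u = q then 1 else 0
  have hM (f : G.V → ℤ) (u : G.V) :
      M.mulVec f u = ∑ v, f v * G.prinDiv v u + if u = q then ∑ v, f v else 0 := by
    simp only [M, Matrix.mulVec, dotProduct, Matrix.of_apply, add_mul, Finset.sum_add_distrib]
    congr 1
    · exact Finset.sum_congr rfl fun v _ => mul_comm _ _
    · split_ifs <;> simp
  have hdeg (f : G.V → ℤ) : ∑ u, M.mulVec f u = ∑ v, f v := by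
    simp only [hM, Finset.sum_add_distrib, sum_sum_mul_prinDiv]
    simp
  have hdet : M.det ≠ 0 := fun h => by
    obtain ⟨f, hf0, hf⟩ := Matrix.exists_mulVec_eq_zero_iff.2 h
    have hsum : ∑ v, f v = 0 := by rw [← hdeg, hf]; simp
    have hconst := hG.eq_of_sum_mul_prinDiv_eq_zero (f := f) fun u => by
      have := hM f u
      rw [hf, hsum] at this
      simpa using this.symm
    refine hf0 (funext fun u => ?_)
    have : (Fintype.card G.V : ℤ) * f u = 0 := by
      rw [← hsum, Finset.sum_congr rfl fun v _ => hconst v u]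
      simp
    have : Nonempty G.V := ⟨q⟩
    simp_all
  refine ⟨M.det, hdet, fun D hD => ?_⟩
  have hinv : M.mulVec (M.adjugate.mulVec D) = M.det • D := by
    rw [Matrix.mulVec_mulVec, Matrix.mul_adjugate, Matrix.smul_mulVec, Matrix.one_mulVec]
  have hsum : ∑ v, M.adjugate.mulVec D v = 0 := by
    have hD' : ∑ v, D v = 0 := hD
    rw [← hdeg, hinv]
    simp [← Finset.mul_sum, hD']
  convert G.sum_mul_prinDiv_mem_Prin (M.adjugate.mulVec D) using 1
  ext u
  rw [← hinv, hM, hsum]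
  simp

end Multigraph

/-- For every finite connected multigraph, the Jacobian group
`Div⁰(G)/Prin(G)` is a finite group. -/
theorem jacobian_group_finite (G : Multigraph) (hG : G.Connected) :
    Finite (G.Div0 ⧸ G.Prin.addSubgroupOf G.Div0) := by
  obtain ⟨d, hd, hmem⟩ := hG.exists_smul_mem_Prin
  have : Module.Finite ℤ G.Div0 :=
    inferInstanceAs (Module.Finite ℤ (AddSubgroup.toIntSubmodule G.Div0))
  have : AddGroup.FG G.Div0 := Module.Finite.iff_addGroup_fg.1 this
  refine AddCommGroup.finite_of_fg_isAddTorsion _ fun x => ?_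
  obtain ⟨D, rfl⟩ := QuotientAddGroup.mk_surjective x
  refine isOfFinAddOrder_iff_zsmul_eq_zero.2 ⟨d, hd, ?_⟩
  rw [← QuotientAddGroup.mk_zsmul, QuotientAddGroup.eq_zero_iff, AddSubgroup.mem_addSubgroupOf]
  exact hmem D D.2
end

section
/- Torelli theorem for graphs: for two finite connected multigraphs G1 and G2, the Jacobian tori Jac(G1) and Jac(G2) are isomorphic (i.e., there is a ℤ-linear isomorphism H1(G1,ℤ) → H1(G2,ℤ) preserving the bilinear forms) if and only if G1^(2) and G2^(2) are cyclically equivalent. -/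
namespace Multigraph

variable {G : Multigraph}

theorem sum_boundaryHom_mul (x : G.E → ℤ) (f : G.V → ℤ) :
    ∑ v, G.boundaryHom x v * f v = ∑ e, x e * (f (G.t e) - f (G.s e)) := by
  simp only [boundaryHom, AddMonoidHom.coe_mk, ZeroHom.coe_mk, Finset.sum_mul]
  rw [Finset.sum_comm]
  refine Finset.sum_congr rfl fun e _ => ?_
  simp [mul_assoc, ← Finset.mul_sum, sub_mul, Finset.sum_sub_distrib]

/-- The cycle space is the orthogonal complement of the coboundaries. -/
theorem mem_cycleSpace_iff {x : G.E → ℤ} :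
    x ∈ G.cycleSpace ↔ ∀ f : G.V → ℤ, ∑ e, x e * (f (G.t e) - f (G.s e)) = 0 := by
  constructor
  · intro h f
    have h0 : G.boundaryHom x = 0 := h
    rw [← sum_boundaryHom_mul, h0]
    simp
  · intro h
    change G.boundaryHom x = 0
    funext v
    simpa [Pi.single_apply] using (sum_boundaryHom_mul x (Pi.single v 1)).trans (h _)

/-- The graph on the vertices of `G` whose adjacencies are given by the edges other than `e`. -/
def deleteEdgeGraph (G : Multigraph) (e : G.E) : SimpleGraph G.V :=
  SimpleGraph.fromRel fun a b => ∃ e', e' ≠ e ∧ G.s e' = a ∧ G.t e' = b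

theorem deleteEdgeGraph_adj {e : G.E} {a b : G.V} (h : (G.deleteEdgeGraph e).Adj a b) :
    ∃ e', e' ≠ e ∧ ((G.s e' = a ∧ G.t e' = b) ∨ (G.s e' = b ∧ G.t e' = a)) := by
  rw [deleteEdgeGraph, SimpleGraph.fromRel_adj] at h
  obtain ⟨-, ⟨e', he, h⟩ | ⟨e', he, h⟩⟩ := h
  · exact ⟨e', he, Or.inl h⟩
  · exact ⟨e', he, Or.inr h⟩

theorem deleteEdgeGraph_reachable {e e' : G.E} (h : e' ≠ e) :
    (G.deleteEdgeGraph e).Reachable (G.s e') (G.t e') := by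
  by_cases hst : G.s e' = G.t e'
  · rw [hst]
  · refine SimpleGraph.Adj.reachable ?_
    rw [deleteEdgeGraph, SimpleGraph.fromRel_adj]
    exact ⟨hst, Or.inl ⟨e', h, rfl, rfl⟩⟩

/-- An edge whose endpoints remain connected after its deletion lies on a cycle. -/
theorem exists_isCycle_of_reachable {e : G.E}
    (h : (G.deleteEdgeGraph e).Reachable (G.t e) (G.s e)) : ∃ C, G.IsCycle C ∧ e ∈ C := by
  obtain ⟨p, hp⟩ := h.exists_isPath
  have hadj : ∀ i : Fin p.length, ∃ e', e' ≠ e ∧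
      ((G.s e' = p.getVert i ∧ G.t e' = p.getVert (i + 1)) ∨
        (G.s e' = p.getVert (i + 1) ∧ G.t e' = p.getVert i)) := fun i =>
    deleteEdgeGraph_adj (p.adj_getVert_succ i.2)
  choose c hce hc using hadj
  have hinj : ∀ i j : ℕ, i ≤ p.length → j ≤ p.length → p.getVert i = p.getVert j → i = j :=
    fun i j hi hj hij => hp.getVert_injOn hi hj hij
  refine ⟨_, ⟨p.length + 1, by omega, Fin.cons e c,
    Fin.cons (G.s e) (fun i => p.getVert i), ?_, ?_, ?_, ?_, rfl⟩, ?_⟩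
  · rw [Fin.cons_injective_iff]
    refine ⟨fun ⟨i, hi⟩ => hce i hi, fun i j hij => ?_⟩
    have h1 := hc i
    have h2 := hc j
    rw [hij] at h1
    have hi := i.2
    have hj := j.2
    have a1 := hinj i j (by omega) (by omega)
    have a2 := hinj i (j + 1) (by omega) (by omega)
    have a3 := hinj (i + 1) j (by omega) (by omega)
    have a4 := hinj (i + 1) (j + 1) (by omega) (by omega)
    refine Fin.ext ?_
    rcases h1 with ⟨h1, h1'⟩ | ⟨h1, h1'⟩ <;> rcases h2 with ⟨h2, h2'⟩ | ⟨h2, h2'⟩ <;>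
      rw [h1] at h2 <;> rw [h1'] at h2'
    · exact a1 h2
    · have := a2 h2; have := a3 h2'; omega
    · have := a3 h2; have := a2 h2'; omega
    · have := a4 h2; omega
  · intro i
    refine Fin.cases ?_ (fun i => ?_) i
    · left
      simp
    · have := hc i
      simpa [← Fin.succ_castSucc] using this
  · rw [← Fin.succ_last]
    simp
  · intro i j
    refine Fin.cases ?_ (fun i => ?_) i <;> refine Fin.cases ?_ (fun j => ?_) j
    · simp
    · intro h
      right; left
      refine ⟨rfl, ?_⟩
      simp only [Fin.cons_zero, Fin.cons_succ] at h
      have := hinj p.length j le_rfl (by omega) (by rw [← h]; simp)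
      rw [← Fin.succ_last, Fin.succ_inj]
      exact Fin.ext (by simp [this])
    · intro h
      right; right
      refine ⟨?_, rfl⟩
      simp only [Fin.cons_zero, Fin.cons_succ] at h
      have := hinj p.length i le_rfl (by omega) (by rw [h]; simp)
      rw [← Fin.succ_last, Fin.succ_inj]
      exact Fin.ext (by simp [this])
    · intro h
      left
      simp only [Fin.cons_succ] at h
      have := hinj i j (by omega) (by omega) h
      rw [Fin.ext this]
  · exact Finset.mem_image.2 ⟨0, Finset.mem_univ _, rfl⟩

/-- A bridge is the coboundary of the indicator function of one of its two sides. -/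
theorem IsBridge.exists_coboundary {e : G.E} (h : G.IsBridge e) :
    ∃ f : G.V → ℤ, ∀ e', f (G.t e') - f (G.s e') = if e' = e then 1 else 0 := by
  classical
  have hn : ¬ (G.deleteEdgeGraph e).Reachable (G.t e) (G.s e) := fun hr => by
    obtain ⟨C, hC, heC⟩ := exists_isCycle_of_reachable hr
    exact h C hC heC
  refine ⟨fun v => if (G.deleteEdgeGraph e).Reachable (G.t e) v then 1 else 0, fun e' => ?_⟩
  by_cases he : e' = e
  · subst he
    simp [hn]
  · have hr := deleteEdgeGraph_reachable he
    have hiff : (G.deleteEdgeGraph e).Reachable (G.t e) (G.t e') ↔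
        (G.deleteEdgeGraph e).Reachable (G.t e) (G.s e') :=
      ⟨fun h => h.trans hr.symm, fun h => h.trans hr⟩
    simp [hiff, he]

theorem IsBridge.apply_eq_zero {e : G.E} (h : G.IsBridge e) {x : G.E → ℤ}
    (hx : x ∈ G.cycleSpace) : x e = 0 := by
  obtain ⟨f, hf⟩ := h.exists_coboundary
  simpa [hf] using mem_cycleSpace_iff.1 hx f

/-- An edge on a cycle has coefficient one in some element of the cycle space. -/
theorem exists_mem_cycleSpace_apply_eq_one {e : G.E} (h : ¬ G.IsBridge e) :
    ∃ x ∈ G.cycleSpace, x e = 1 := by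
  classical
  simp only [IsBridge, not_forall, not_not] at h
  obtain ⟨C, ⟨n, -, c, v, hc, hcv, hv, -, rfl⟩, he⟩ := h
  obtain ⟨i₀, -, rfl⟩ := Finset.mem_image.1 he
  have hε : ∀ i, ∃ ε : ℤ, ε * ε = 1 ∧ ∀ f : G.V → ℤ,
      ε * (f (G.t (c i)) - f (G.s (c i))) = f (v i.succ) - f (v i.castSucc) := by
    intro i
    rcases hcv i with ⟨h1, h2⟩ | ⟨h1, h2⟩
    · exact ⟨1, by norm_num, fun f => by rw [h1, h2]; ring⟩
    · exact ⟨-1, by norm_num, fun f => by rw [h1, h2]; ring⟩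
  choose ε hεε hε using hε
  refine ⟨fun e => ε i₀ * ∑ i, if c i = e then ε i else 0, ?_, ?_⟩
  · rw [mem_cycleSpace_iff]
    intro f
    simp only [mul_assoc, Finset.sum_mul, ← Finset.mul_sum]
    rw [Finset.sum_comm]
    simp only [ite_mul, zero_mul, Finset.sum_ite_eq, Finset.mem_univ, if_true, hε]
    have h1 := Fin.sum_univ_succ (fun i => f (v i))
    have h2 := Fin.sum_univ_castSucc (fun i => f (v i))
    have h3 : ∑ i : Fin n, (f (v i.succ) - f (v i.castSucc)) = 0 := by
      rw [Finset.sum_sub_distrib]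
      simp only [hv] at h1
      linarith
    rw [h3, mul_zero]
  · simp [hc.eq_iff, hεε]

/-- Every nonzero element of the cycle space conforms to a nonzero one with coefficients
in `{-1, 0, 1}`. -/
theorem exists_conformal {x : G.E → ℤ} (hx : x ∈ G.cycleSpace) (hx0 : x ≠ 0) :
    ∃ y ∈ G.cycleSpace, y ≠ 0 ∧
      ∀ e, |x e - y e| + |y e| = |x e| ∧ y e * y e = |y e| := by
  classical
  let head : G.E → G.V := fun e => if 0 < x e then G.t e else G.s e
  let tail : G.E → G.V := fun e => if 0 < x e then G.s e else G.t e
  have hnext : ∀ e, ∃ e', x e ≠ 0 → x e' ≠ 0 ∧ tail e' = head e := by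
    intro e
    by_contra! hcon
    obtain ⟨he, -⟩ := hcon e
    have hcon : ∀ e', x e' ≠ 0 → tail e' ≠ head e := fun e' => (hcon e').2
    have hsum := mem_cycleSpace_iff.1 hx (fun v => if v = head e then 1 else 0)
    have hpos : ∀ e', 0 ≤ x e' * ((if G.t e' = head e then 1 else 0)
        - (if G.s e' = head e then 1 else 0)) := by
      intro e'
      have h1 := hcon e'
      rcases lt_trichotomy (x e') 0 with h | h | h
      · simp only [tail, h.not_gt, if_false] at h1
        rw [if_neg (h1 h.ne)]
        split_ifs <;> linarith
      · simp [h]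
      · simp only [tail, h, if_true] at h1
        rw [if_neg (h1 h.ne')]
        split_ifs <;> linarith
    have hz := (Finset.sum_eq_zero_iff_of_nonneg fun e' _ => hpos e').1 hsum e (Finset.mem_univ e)
    have h1 := hcon e he
    rcases lt_or_gt_of_ne he with h | h
    · simp only [tail, head, h.not_gt, if_false] at h1 hz
      simp [h1, he] at hz
    · simp only [tail, head, h, if_true] at h1 hz
      simp [h1, he] at hz
  choose nx hnx using hnext
  obtain ⟨e₀, he₀⟩ : ∃ e, x e ≠ 0 := Function.ne_iff.1 hx0
  have hiter : ∀ n, x (nx^[n] e₀) ≠ 0 := by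
    intro n
    induction n with
    | zero => exact he₀
    | succ n ih => rw [Function.iterate_succ_apply']; exact (hnx _ ih).1
  let T : Finset G.E := Finset.univ.filter fun e => x e ≠ 0 ∧ e ∈ Function.periodicPts nx
  have hT : ∀ {e}, e ∈ T ↔ x e ≠ 0 ∧ e ∈ Function.periodicPts nx := fun {e} => by simp [T]
  have hTne : T.Nonempty := by
    obtain ⟨m, n, hmn, heq⟩ := Finite.exists_ne_map_eq_of_infinite fun n => nx^[n] e₀
    wlog hlt : m < n generalizing m n
    · exact this n m hmn.symm heq.symm (by omega)
    refine ⟨nx^[m] e₀, hT.2 ⟨hiter m, Function.mk_mem_periodicPts (n := n - m) (by omega) ?_⟩⟩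
    change nx^[n - m] (nx^[m] e₀) = nx^[m] e₀
    rw [← Function.iterate_add_apply, Nat.sub_add_cancel hlt.le]
    exact heq.symm
  have hbij := Function.bijOn_periodicPts nx
  have hmaps : ∀ e ∈ T, nx e ∈ T := fun e he =>
    hT.2 ⟨(hnx e (hT.1 he).1).1, hbij.mapsTo (hT.1 he).2⟩
  have hinj : Set.InjOn nx T := fun a ha b hb hab =>
    hbij.injOn (hT.1 ha).2 (hT.1 hb).2 hab
  have hsurj : Set.SurjOn nx T T := Finset.surjOn_of_injOn_of_card_le nx hmaps hinj le_rfl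
  refine ⟨fun e => if e ∈ T then SignType.sign (x e) else 0, ?_, ?_, fun e => ?_⟩
  · rw [mem_cycleSpace_iff]
    intro f
    simp only [ite_mul, zero_mul, Finset.sum_ite_mem, Finset.univ_inter]
    have key : ∀ e ∈ T, (SignType.sign (x e) : ℤ) * (f (G.t e) - f (G.s e)) =
        f (tail (nx e)) - f (tail e) := by
      intro e he
      rw [(hnx e (hT.1 he).1).2]
      rcases lt_or_gt_of_ne (hT.1 he).1 with h | h
      · simp [tail, head, h.not_gt, sign_neg h]
      · simp [tail, head, h, sign_pos h]
    rw [Finset.sum_congr rfl key, Finset.sum_sub_distrib, sub_eq_zero]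
    exact Finset.sum_nbij nx hmaps hinj hsurj fun _ _ => rfl
  · obtain ⟨e, he⟩ := hTne
    refine Function.ne_iff.2 ⟨e, ?_⟩
    simp only [he, if_true, Pi.zero_apply]
    rcases lt_or_gt_of_ne (hT.1 he).1 with h | h
    · simp [sign_neg h]
    · simp [sign_pos h]
  · by_cases he : e ∈ T
    · simp only [he, if_true]
      rcases lt_or_gt_of_ne (hT.1 he).1 with h | h
      · simp only [sign_neg h, SignType.coe_neg_one]
        grind
      · simp only [sign_pos h, SignType.coe_one]
        grind
    · simp [he]

end Multigraph

section Functionals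

variable {L : Type*} [AddCommGroup L]

/-- Finitely many homomorphisms to `ℤ`, each nonzero somewhere on a subgroup, are
simultaneously nonzero at some element of the subgroup. -/
theorem AddSubgroup.exists_mem_forall_apply_ne_zero (K : AddSubgroup L) (F : Finset (L →+ ℤ))
    (hF : ∀ h ∈ F, ∃ x ∈ K, h x ≠ 0) : ∃ x ∈ K, ∀ h ∈ F, h x ≠ 0 := by
  classical
  induction F using Finset.induction_on with
  | empty => exact ⟨0, K.zero_mem, by simp⟩
  | insert g F _ ih =>
    obtain ⟨x, hxK, hx⟩ := ih fun h hh => hF h (Finset.mem_insert_of_mem hh)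
    by_cases hgx : g x = 0
    · obtain ⟨y, hyK, hy⟩ := hF g (Finset.mem_insert_self _ _)
      refine ⟨(1 + ∑ h ∈ F, |h y|) • x + y, K.add_mem (K.zsmul_mem hxK _) hyK, fun h hh => ?_⟩
      rcases Finset.mem_insert.1 hh with rfl | hh
      · simpa [hgx] using hy
      · intro h0
        have h1 : |h y| ≤ ∑ h ∈ F, |h y| :=
          Finset.single_le_sum (f := fun h : L →+ ℤ => |h y|) (fun _ _ => abs_nonneg _) hh
        have h2 : 1 ≤ |h x| := Int.one_le_abs (hx h hh)
        have h3 : |h y| = (1 + ∑ h ∈ F, |h y|) * |h x| := by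
          rw [map_add, map_zsmul, smul_eq_mul] at h0
          rw [eq_neg_of_add_eq_zero_right h0, abs_neg, abs_mul, abs_of_pos]
          have := abs_nonneg (h y)
          omega
        nlinarith [abs_nonneg (h y)]
    · refine ⟨x, hxK, fun h hh => ?_⟩
      rcases Finset.mem_insert.1 hh with rfl | hh
      exacts [hgx, hx h hh]

/-- A surjective homomorphism to `ℤ` vanishing on the kernel of another one agrees with it
up to sign. -/
theorem AddMonoidHom.eq_or_eq_neg_of_ker_le {f g : L →+ ℤ} (hf : ∃ x, f x = 1)
    (hg : ∃ x, g x = 1) (h : ∀ x, f x = 0 → g x = 0) : g = f ∨ g = -f := by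
  obtain ⟨c, hc⟩ := hf
  obtain ⟨d, hd⟩ := hg
  have key : ∀ x, g x = f x * g c := fun x => by
    have := h (x - f x • c) (by simp [hc])
    rw [map_sub, map_zsmul, smul_eq_mul] at this
    linarith
  have hu : IsUnit (g c) := IsUnit.of_mul_eq_one_right (f d) (by rw [← key, hd])
  rcases Int.isUnit_iff.1 hu with hu | hu
  · exact Or.inl (AddMonoidHom.ext fun x => by rw [key, hu, mul_one])
  · exact Or.inr (AddMonoidHom.ext fun x => by rw [key, hu]; simp)

theorem abs_add_add_abs_sub {a b : ℤ} (h : |b| ≤ |a|) : |a + b| + |a - b| = 2 * |a| := by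
  grind

/-- The second difference of `∑ |f i|` across the hyperplane `f₀ = 0`, at a point lying on no
other hyperplane `f i = 0`, counts the indices with `f i = ± f₀`. -/
theorem sum_abs_second_difference {ι : Type*} [Fintype ι] (f : ι → L →+ ℤ) (f₀ : L →+ ℤ)
    {x y : L} (hx : f₀ x = 0) (hy : f₀ y = 1) [DecidablePred fun i => f i = f₀ ∨ f i = -f₀]
    (h : ∀ i, ¬ (f i = f₀ ∨ f i = -f₀) → |f i y| ≤ |f i x|) :
    ∑ i, |f i (x + y)| + ∑ i, |f i (x - y)| - 2 * ∑ i, |f i x| =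
      2 * ((Finset.univ.filter fun i => f i = f₀ ∨ f i = -f₀).card : ℤ) := by
  rw [← Finset.sum_add_distrib, Finset.mul_sum, ← Finset.sum_sub_distrib, Finset.card_filter]
  push_cast
  rw [Finset.mul_sum]
  refine Finset.sum_congr rfl fun i _ => ?_
  split_ifs with hi
  · rcases hi with hi | hi <;> simp [hi, hx, hy]
  · rw [map_add, map_sub, abs_add_add_abs_sub (h i hi)]
    simp

/-- The function `∑ |f i|` determines the multiplicity with which a functional occurs, up to
sign, among the surjective functionals `f i`. -/
theorem card_filter_eq_of_sum_abs_eq {ι κ : Type*} [Fintype ι] [Fintype κ]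
    (f : ι → L →+ ℤ) (g : κ → L →+ ℤ) (hf : ∀ i, ∃ x, f i x = 1) (hg : ∀ j, ∃ x, g j x = 1)
    (hfg : ∀ x, ∑ i, |f i x| = ∑ j, |g j x|) (f₀ : L →+ ℤ) (hf₀ : ∃ x, f₀ x = 1)
    [DecidablePred fun i => f i = f₀ ∨ f i = -f₀] [DecidablePred fun j => g j = f₀ ∨ g j = -f₀] :
    (Finset.univ.filter fun i => f i = f₀ ∨ f i = -f₀).card =
      (Finset.univ.filter fun j => g j = f₀ ∨ g j = -f₀).card := by
  classical
  let F : Finset (L →+ ℤ) := (Finset.univ.image f ∪ Finset.univ.image g).filter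
    fun h => ¬ (h = f₀ ∨ h = -f₀)
  have hsurj : ∀ h ∈ F, ∃ x, h x = 1 := by
    intro h hh
    simp only [F, Finset.mem_filter, Finset.mem_union, Finset.mem_image] at hh
    obtain ⟨⟨i, -, rfl⟩ | ⟨j, -, rfl⟩, -⟩ := hh
    exacts [hf i, hg j]
  obtain ⟨x, hxK, hx⟩ := f₀.ker.exists_mem_forall_apply_ne_zero F fun h hh => by
    by_contra! hcon
    exact (Finset.mem_filter.1 hh).2
      (AddMonoidHom.eq_or_eq_neg_of_ker_le hf₀ (hsurj h hh) fun x hx => hcon x hx)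
  obtain ⟨y, hy⟩ := hf₀
  have hle : ∀ h ∈ F, |h y| ≤ |h ((∑ h ∈ F, |h y|) • x)| := by
    intro h hh
    have h1 : |h y| ≤ ∑ h ∈ F, |h y| :=
      Finset.single_le_sum (f := fun h : L →+ ℤ => |h y|) (fun _ _ => abs_nonneg _) hh
    have h2 : 1 ≤ |h x| := Int.one_le_abs (hx h hh)
    rw [map_zsmul, smul_eq_mul, abs_mul, abs_of_nonneg ((abs_nonneg _).trans h1)]
    nlinarith [abs_nonneg (h y)]
  have hx' : f₀ ((∑ h ∈ F, |h y|) • x) = 0 := by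
    rw [map_zsmul, AddMonoidHom.mem_ker.1 hxK, smul_zero]
  have e₁ := sum_abs_second_difference f f₀ hx' hy fun i hi => hle _ <|
    Finset.mem_filter.2
      ⟨Finset.mem_union_left _ (Finset.mem_image_of_mem _ (Finset.mem_univ i)), hi⟩
  have e₂ := sum_abs_second_difference g f₀ hx' hy fun j hj => hle _ <|
    Finset.mem_filter.2
      ⟨Finset.mem_union_right _ (Finset.mem_image_of_mem _ (Finset.mem_univ j)), hj⟩
  simp only [hfg] at e₁
  rw [e₁] at e₂
  exact_mod_cast mul_left_cancel₀ two_ne_zero e₂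

/-- Surjective functionals `f i` are determined up to order and signs by the function
`∑ |f i|`. -/
theorem exists_equiv_of_sum_abs_eq {ι κ : Type*} [Fintype ι] [Fintype κ]
    (f : ι → L →+ ℤ) (g : κ → L →+ ℤ) (hf : ∀ i, ∃ x, f i x = 1) (hg : ∀ j, ∃ x, g j x = 1)
    (hfg : ∀ x, ∑ i, |f i x| = ∑ j, |g j x|) :
    ∃ σ : ι ≃ κ, ∀ i, g (σ i) = f i ∨ g (σ i) = -f i := by
  classical
  let S : Setoid (L →+ ℤ) :=
    { r := fun a b => a = b ∨ a = -b
      iseqv := ⟨fun _ => Or.inl rfl, fun h => by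
        rcases h with rfl | rfl <;> simp, fun h h' => by
        rcases h with rfl | rfl <;> rcases h' with rfl | rfl <;> simp⟩ }
  have hfib : ∀ q : Quotient S,
      Nonempty ({i // Quotient.mk S (f i) = q} ≃ {j // Quotient.mk S (g j) = q}) := by
    intro q
    induction q using Quotient.inductionOn with
    | h f₀ =>
      have hr : ∀ h : L →+ ℤ, Quotient.mk S h = Quotient.mk S f₀ ↔ (h = f₀ ∨ h = -f₀) :=
        fun h => Quotient.eq
      by_cases hf₀ : ∃ x, f₀ x = 1
      · refine ⟨Fintype.equivOfCardEq ?_⟩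
        rw [Fintype.card_subtype, Fintype.card_subtype]
        simp only [hr]
        exact card_filter_eq_of_sum_abs_eq f g hf hg hfg f₀ hf₀
      · have hno : ∀ h : L →+ ℤ, (∃ x, h x = 1) → ¬ (h = f₀ ∨ h = -f₀) := by
          rintro h ⟨x, hx⟩ (rfl | rfl)
          · exact hf₀ ⟨x, hx⟩
          · exact hf₀ ⟨-x, by simpa using hx⟩
        have : IsEmpty {i // Quotient.mk S (f i) = Quotient.mk S f₀} :=
          ⟨fun i => hno _ (hf i) ((hr _).1 i.2)⟩
        have : IsEmpty {j // Quotient.mk S (g j) = Quotient.mk S f₀} :=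
          ⟨fun j => hno _ (hg j) ((hr _).1 j.2)⟩
        exact ⟨Equiv.equivOfIsEmpty _ _⟩
  let e := fun q => (hfib q).some
  refine ⟨(Equiv.sigmaFiberEquiv fun i => Quotient.mk S (f i)).symm.trans
    ((Equiv.sigmaCongrRight e).trans (Equiv.sigmaFiberEquiv fun j => Quotient.mk S (g j))),
    fun i => ?_⟩
  exact Quotient.exact (e (Quotient.mk S (f i)) ⟨i, rfl⟩).2

end Functionals

namespace Multigraph

variable {G : Multigraph}

theorem sum_contractBridges (g : G.E → ℤ) (hg : ∀ e, G.IsBridge e → g e = 0) :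
    ∑ e : G.contractBridges.E, g e.1 = ∑ e, g e := by
  classical
  refine (Finset.sum_subtype (Finset.univ.filter fun e => ¬ G.IsBridge e)
    (by simp) g).symm.trans ?_
  refine Finset.sum_subset (Finset.subset_univ _) fun e _ he => hg e ?_
  simpa using he

theorem restrict_mem_cycleSpace {x : G.E → ℤ} (hx : x ∈ G.cycleSpace) :
    (fun e : G.contractBridges.E => x e.1) ∈ G.contractBridges.cycleSpace := by
  refine mem_cycleSpace_iff.2 fun f => ?_
  rw [← mem_cycleSpace_iff.1 hx fun v => f (Quot.mk _ v)]
  exact sum_contractBridges (fun e => x e * (f (Quot.mk _ (G.t e)) - f (Quot.mk _ (G.s e))))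
    fun e he => by rw [he.apply_eq_zero hx, zero_mul]

theorem mem_cycleSpace_of_restrict_mem {x : G.E → ℤ} (hb : ∀ e, G.IsBridge e → x e = 0)
    (hx : (fun e : G.contractBridges.E => x e.1) ∈ G.contractBridges.cycleSpace) :
    x ∈ G.cycleSpace := by
  classical
  refine mem_cycleSpace_iff.2 fun f => ?_
  have hcut : ∀ e, ∃ c : G.V → ℤ, G.IsBridge e →
      ∀ e', c (G.t e') - c (G.s e') = if e' = e then 1 else 0 := fun e => by
    by_cases he : G.IsBridge e
    · obtain ⟨c, hc⟩ := he.exists_coboundary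
      exact ⟨c, fun _ => hc⟩
    · exact ⟨0, fun h => absurd h he⟩
  choose c hc using hcut
  -- Subtracting multiples of cuts makes `f` constant along the bridges.
  let g : G.V → ℤ := fun v =>
    f v - ∑ e ∈ Finset.univ.filter G.IsBridge, (f (G.t e) - f (G.s e)) * c e v
  have hg : ∀ e', g (G.t e') - g (G.s e') =
      if G.IsBridge e' then 0 else f (G.t e') - f (G.s e') := by
    intro e'
    have h1 : ∑ e ∈ Finset.univ.filter G.IsBridge, (f (G.t e) - f (G.s e)) * c e (G.t e') -
        ∑ e ∈ Finset.univ.filter G.IsBridge, (f (G.t e) - f (G.s e)) * c e (G.s e') =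
        if G.IsBridge e' then f (G.t e') - f (G.s e') else 0 := by
      rw [← Finset.sum_sub_distrib, Finset.sum_congr rfl fun e he => by
        rw [← mul_sub, hc e (Finset.mem_filter.1 he).2 e']]
      simp
    simp only [g]
    split_ifs at h1 ⊢ <;> linarith
  let g' : G.contractBridges.V → ℤ := Quot.lift g fun a b ⟨e, he, ha, hb⟩ => by
    have he : G.IsBridge e := he
    have := hg e
    rw [if_pos he, ha, hb] at this
    linarith
  have h2 := mem_cycleSpace_iff.1 hx g'
  have h3 := sum_contractBridges (fun e => x e * (g (G.t e) - g (G.s e)))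
    fun e he => by rw [hb e he, zero_mul]
  rw [← h2]
  refine Eq.trans ?_ h3.symm
  refine Finset.sum_congr rfl fun e _ => ?_
  rw [hg]
  split_ifs with he
  · rw [hb e he, zero_mul, zero_mul]
  · rfl

end Multigraph

open Multigraph

theorem JacIsoGraph.symm {G₁ G₂ : Multigraph} (h : JacIsoGraph G₁ G₂) : JacIsoGraph G₂ G₁ := by
  obtain ⟨φ, hφ⟩ := h
  exact ⟨φ.symm, fun x y => by simpa using (hφ (φ.symm x) (φ.symm y)).symm⟩

theorem JacIsoGraph.trans {G₁ G₂ G₃ : Multigraph} (h : JacIsoGraph G₁ G₂)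
    (h' : JacIsoGraph G₂ G₃) : JacIsoGraph G₁ G₃ := by
  obtain ⟨φ, hφ⟩ := h
  obtain ⟨ψ, hψ⟩ := h'
  exact ⟨φ.trans ψ, fun x y => (hψ (φ x) (φ y)).trans (hφ x y)⟩

theorem jacIsoGraph_contractBridges (G : Multigraph) : JacIsoGraph G G.contractBridges := by
  classical
  let r : G.cycleSpace →+ G.contractBridges.cycleSpace :=
    { toFun := fun x => ⟨fun e => x.1 e.1, restrict_mem_cycleSpace x.2⟩
      map_zero' := rfl
      map_add' := fun _ _ => rfl }
  have hr : Function.Bijective r := by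
    constructor
    · intro x y hxy
      refine Subtype.ext (funext fun e => ?_)
      by_cases he : G.IsBridge e
      · rw [he.apply_eq_zero x.2, he.apply_eq_zero y.2]
      · exact congrFun (congrArg Subtype.val hxy) ⟨e, he⟩
    · intro y
      let x : G.E → ℤ := fun e => if he : G.IsBridge e then 0 else y.1 ⟨e, he⟩
      have hxy : (fun e : G.contractBridges.E => x e.1) = y.1 := funext fun e => dif_neg e.2
      have hx : x ∈ G.cycleSpace := mem_cycleSpace_of_restrict_mem (fun e he => dif_pos he)
        (by rw [hxy]; exact y.2)
      exact ⟨⟨x, hx⟩, Subtype.ext hxy⟩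
  refine ⟨AddEquiv.ofBijective r hr, fun x y => ?_⟩
  exact sum_contractBridges (fun e => x.1 e * y.1 e)
    fun e he => by rw [he.apply_eq_zero x.2, zero_mul]

/-- A norm-preserving homomorphism of cycle spaces does not increase the `ℓ¹`-norm. -/
theorem sum_abs_apply_le {G₁ G₂ : Multigraph} (φ : G₁.cycleSpace →+ G₂.cycleSpace)
    (hφ : ∀ x, ∑ e, (φ x).1 e * (φ x).1 e = ∑ e, x.1 e * x.1 e) (x : G₁.cycleSpace) :
    ∑ e, |(φ x).1 e| ≤ ∑ e, |x.1 e| := by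
  induction hn : (∑ e, |x.1 e|).toNat using Nat.strong_induction_on generalizing x with
  | _ n ih =>
    by_cases hx0 : x = 0
    · simp [hx0]
    · obtain ⟨y, hy, hy0, hyx⟩ := exists_conformal x.2 fun h => hx0 (Subtype.ext h)
      let y' : G₁.cycleSpace := ⟨y, hy⟩
      have hsum : ∑ e, |(x - y').1 e| + ∑ e, |y e| = ∑ e, |x.1 e| := by
        rw [← Finset.sum_add_distrib]
        exact Finset.sum_congr rfl fun e _ => (hyx e).1
      have hpos : 0 < ∑ e, |y e| := by
        obtain ⟨e, he⟩ := Function.ne_iff.1 hy0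
        exact Finset.sum_pos' (fun _ _ => abs_nonneg _) ⟨e, Finset.mem_univ e, abs_pos.2 he⟩
      have hnonneg : 0 ≤ ∑ e, |(x - y').1 e| := Finset.sum_nonneg fun _ _ => abs_nonneg _
      have h1 := ih _ (by omega) (x - y') rfl
      have h2 : ∑ e, |(φ y').1 e| ≤ ∑ e, |y e| := calc
        ∑ e, |(φ y').1 e| ≤ ∑ e, (φ y').1 e * (φ y').1 e :=
          Finset.sum_le_sum fun e _ => by
            rw [← abs_mul_abs_self]
            rcases eq_or_ne ((φ y').1 e) 0 with h | h
            · simp [h]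
            · exact le_mul_of_one_le_left (abs_nonneg _) (Int.one_le_abs h)
        _ = ∑ e, y e * y e := hφ y'
        _ = ∑ e, |y e| := Finset.sum_congr rfl fun e _ => (hyx e).2
      have h3 : ∑ e, |(φ x).1 e| ≤ ∑ e, |(φ (x - y')).1 e| + ∑ e, |(φ y').1 e| := by
        rw [← Finset.sum_add_distrib]
        refine Finset.sum_le_sum fun e _ => ?_
        have : (φ x).1 e = (φ (x - y')).1 e + (φ y').1 e := by
          conv_lhs => rw [← sub_add_cancel x y', map_add]
          rfl
        rw [this]
        exact abs_add_le _ _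
      linarith

theorem JacIsoGraph.cyclicallyEquivalent {G₁ G₂ : Multigraph}
    (h₁ : ∀ e, ∃ x ∈ G₁.cycleSpace, x e = 1) (h₂ : ∀ e, ∃ x ∈ G₂.cycleSpace, x e = 1)
    (h : JacIsoGraph G₁ G₂) : CyclicallyEquivalent G₁ G₂ := by
  obtain ⟨φ, hφ⟩ := h
  let f : G₁.E → G₁.cycleSpace →+ ℤ := fun e =>
    (Pi.evalAddMonoidHom (fun _ => ℤ) e).comp G₁.cycleSpace.subtype
  let g : G₂.E → G₁.cycleSpace →+ ℤ := fun e =>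
    ((Pi.evalAddMonoidHom (fun _ => ℤ) e).comp G₂.cycleSpace.subtype).comp φ.toAddMonoidHom
  have hf : ∀ e, ∃ x, f e x = 1 := fun e => by
    obtain ⟨x, hx, hxe⟩ := h₁ e
    exact ⟨⟨x, hx⟩, hxe⟩
  have hg : ∀ e, ∃ x, g e x = 1 := fun e => by
    obtain ⟨x, hx, hxe⟩ := h₂ e
    exact ⟨φ.symm ⟨x, hx⟩, by simpa [g] using hxe⟩
  have hfg : ∀ x, ∑ e, |f e x| = ∑ e, |g e x| := fun x => by
    refine le_antisymm ?_ (sum_abs_apply_le φ.toAddMonoidHom (fun x => hφ x x) x)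
    refine le_of_eq_of_le ?_ (sum_abs_apply_le φ.symm.toAddMonoidHom
      (fun y => by simpa using (hφ (φ.symm y) (φ.symm y)).symm) (φ x))
    simp [f]
  obtain ⟨σ, hσ⟩ := exists_equiv_of_sum_abs_eq f g hf hg hfg
  have hε : ∀ e, ∃ ε : ℤ, (ε = 1 ∨ ε = -1) ∧ ∀ x : G₁.cycleSpace, (φ x).1 (σ e) = ε * x.1 e := by
    intro e
    rcases hσ e with h | h
    · exact ⟨1, Or.inl rfl, fun x => (DFunLike.congr_fun h x).trans (one_mul _).symm⟩
    · exact ⟨-1, Or.inr rfl, fun x => (DFunLike.congr_fun h x).trans (neg_one_mul _).symm⟩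
  choose ε hε hφε using hε
  have hmap : ∀ x : G₁.cycleSpace,
      (fun e₂ => ε (σ.symm e₂) * x.1 (σ.symm e₂)) = (φ x).1 := fun x =>
    funext fun e₂ => by rw [← hφε, Equiv.apply_symm_apply]
  refine ⟨σ, ε, hε, Set.ext fun y => ⟨?_, fun hy => ?_⟩⟩
  · rintro ⟨x, hx, rfl⟩
    exact Set.mem_of_eq_of_mem (hmap ⟨x, hx⟩) (φ ⟨x, hx⟩).2
  · refine ⟨(φ.symm ⟨y, hy⟩).1, (φ.symm ⟨y, hy⟩).2, ?_⟩
    exact (hmap _).trans (by simp)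

theorem CyclicallyEquivalent.jacIsoGraph {G₁ G₂ : Multigraph} (h : CyclicallyEquivalent G₁ G₂) :
    JacIsoGraph G₁ G₂ := by
  obtain ⟨σ, ε, hε, himg⟩ := h
  have hεε : ∀ e, ε e * ε e = 1 := fun e => by rcases hε e with h | h <;> rw [h] <;> norm_num
  let r : G₁.cycleSpace →+ G₂.cycleSpace :=
    { toFun := fun x => ⟨fun e₂ => ε (σ.symm e₂) * x.1 (σ.symm e₂),
        himg.subset (Set.mem_image_of_mem _ x.2)⟩
      map_zero' := Subtype.ext (funext fun e₂ => mul_zero _)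
      map_add' := fun _ _ => Subtype.ext (funext fun e₂ => mul_add _ _ _) }
  have hr : Function.Bijective r := by
    constructor
    · intro x y hxy
      refine Subtype.ext (funext fun e => ?_)
      have h1 : ε (σ.symm (σ e)) * x.1 (σ.symm (σ e)) = ε (σ.symm (σ e)) * y.1 (σ.symm (σ e)) :=
        congrFun (congrArg Subtype.val hxy) (σ e)
      rw [Equiv.symm_apply_apply] at h1
      exact mul_left_cancel₀ (left_ne_zero_of_mul_eq_one (hεε e)) h1
    · intro y
      obtain ⟨x, hx, hxy⟩ := himg.superset y.2
      exact ⟨⟨x, hx⟩, Subtype.ext hxy⟩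
  refine ⟨AddEquiv.ofBijective r hr, fun x y => ?_⟩
  rw [← Equiv.sum_comp σ.symm]
  refine Finset.sum_congr rfl fun e₂ _ => ?_
  change ε (σ.symm e₂) * x.1 (σ.symm e₂) * (ε (σ.symm e₂) * y.1 (σ.symm e₂)) = _
  rw [mul_mul_mul_comm, hεε, one_mul]

theorem exists_mem_cycleSpace_contractBridges (G : Multigraph) (e : G.contractBridges.E) :
    ∃ x ∈ G.contractBridges.cycleSpace, x e = 1 := by
  obtain ⟨x, hx, hxe⟩ := exists_mem_cycleSpace_apply_eq_one e.2
  exact ⟨_, restrict_mem_cycleSpace hx, hxe⟩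

/-- Torelli theorem for graphs: for two finite connected multigraphs
`G₁`, `G₂`, the Jacobian tori `Jac(G₁)` and `Jac(G₂)` are isomorphic if and only if
`G₁^(2)` and `G₂^(2)` are cyclically equivalent. -/
theorem graph_torelli (G₁ G₂ : Multigraph) (h₁ : G₁.Connected) (h₂ : G₂.Connected) :
    JacIsoGraph G₁ G₂ ↔ CyclicallyEquivalent G₁.contractBridges G₂.contractBridges := by
  constructor
  · intro h
    exact (((jacIsoGraph_contractBridges G₁).symm.trans h).trans
      (jacIsoGraph_contractBridges G₂)).cyclicallyEquivalent
      (exists_mem_cycleSpace_contractBridges G₁) (exists_mem_cycleSpace_contractBridges G₂)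
  · intro h
    exact ((jacIsoGraph_contractBridges G₁).trans h.jacIsoGraph).trans
      (jacIsoGraph_contractBridges G₂).symm
end

section
/- The cyclic equivalence class of Γ^(3) is uniquely determined by Γ: if Γ is a tropical curve and Γ^(3), Γ'^(3) are two tropical curves obtained from Γ by the Γ^(3)-construction (with possibly different choices of the surviving edge in each C1-set), then Γ^(3) and Γ'^(3) are cyclically equivalent. -/
namespace Multigraph

variable {G : Multigraph}

/-- A cycle pairs to zero with every coboundary, with coefficients in any abelian group. -/
theorem sum_smul_sub_eq_zero {A : Type*} [AddCommGroup A] {x : G.E → ℤ}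
    (hx : x ∈ G.cycleSpace) (f : G.V → A) : ∑ e, x e • (f (G.t e) - f (G.s e)) = 0 := by
  have key : ∀ e : G.E, x e • (f (G.t e) - f (G.s e)) =
      ∑ v, (x e * ((if G.t e = v then 1 else 0) - (if G.s e = v then 1 else 0))) • f v := by
    intro e
    simp only [mul_smul, sub_smul, ite_smul, one_smul, zero_smul, ← Finset.smul_sum,
      Finset.sum_sub_distrib, Finset.sum_ite_eq, Finset.mem_univ, if_true]
  rw [Finset.sum_congr rfl fun e _ => key e, Finset.sum_comm]
  refine Finset.sum_eq_zero fun v _ => ?_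
  rw [← Finset.sum_smul]
  have hv : ∑ e, x e * ((if G.t e = v then 1 else 0) - (if G.s e = v then 1 else 0)) = 0 :=
    congrFun (AddMonoidHom.mem_ker.mp hx) v
  rw [hv, zero_smul]

theorem mem_cycleSpace_of_forall {x : G.E → ℤ}
    (hx : ∀ f : G.V → ℤ, ∑ e, x e * (f (G.t e) - f (G.s e)) = 0) : x ∈ G.cycleSpace :=
  AddMonoidHom.mem_ker.mpr (funext fun v => hx fun w => if w = v then 1 else 0)

/-- Every edge in the support of an integral cycle lies on a simple cycle inside the support. -/
theorem exists_isCycle_of_ne_zero {x : G.E → ℤ} (hx : x ∈ G.cycleSpace) {e₀ : G.E}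
    (he₀ : x e₀ ≠ 0) : ∃ C : Finset G.E, G.IsCycle C ∧ e₀ ∈ C ∧ ∀ e ∈ C, x e ≠ 0 := by
  classical
  let S : SimpleGraph G.V := SimpleGraph.fromRel fun a b =>
    ∃ e, e ≠ e₀ ∧ x e ≠ 0 ∧ G.s e = a ∧ G.t e = b
  have hreach : S.Reachable (G.t e₀) (G.s e₀) := by
    by_contra hne
    have h0 := sum_smul_sub_eq_zero hx
      fun v => if S.Reachable (G.t e₀) v then (1 : ℤ) else 0
    rw [Finset.sum_eq_single e₀] at h0
    · simp [hne, he₀] at h0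
    · intro e _ hee
      by_cases hxe : x e = 0
      · simp [hxe]
      by_cases hst : G.s e = G.t e
      · simp [hst]
      have hadj : S.Adj (G.s e) (G.t e) :=
        (SimpleGraph.fromRel_adj _ _ _).mpr ⟨hst, Or.inl ⟨e, hee, hxe, rfl, rfl⟩⟩
      have : S.Reachable (G.t e₀) (G.t e) ↔ S.Reachable (G.t e₀) (G.s e) :=
        ⟨fun h => h.trans hadj.symm.reachable, fun h => h.trans hadj.reachable⟩
      simp [this]
    · simp
  obtain ⟨p, hp⟩ := hreach.exists_isPath
  have hedge : ∀ i : Fin p.length, ∃ e, e ≠ e₀ ∧ x e ≠ 0 ∧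
      ((G.s e = p.getVert i ∧ G.t e = p.getVert (i + 1)) ∨
        (G.s e = p.getVert (i + 1) ∧ G.t e = p.getVert i)) := by
    intro i
    obtain ⟨-, ⟨e, h1, h2, h3⟩ | ⟨e, h1, h2, h3⟩⟩ :=
      (SimpleGraph.fromRel_adj _ _ _).mp (p.adj_getVert_succ i.2)
    · exact ⟨e, h1, h2, Or.inl h3⟩
    · exact ⟨e, h1, h2, Or.inr h3⟩
  choose g hg₀ hgx hg using hedge
  have hinj : ∀ i j : ℕ, i ≤ p.length → j ≤ p.length → p.getVert i = p.getVert j → i = j :=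
    fun i j hi hj hij => hp.getVert_injOn hi hj hij
  have hginj : Function.Injective g := by
    intro i j hij
    have hi := hg i
    have hj := hg j
    rw [← hij] at hj
    have hi2 := i.2
    have hj2 := j.2
    apply Fin.ext
    rcases hi with ⟨a, b⟩ | ⟨a, b⟩ <;> rcases hj with ⟨c, d⟩ | ⟨c, d⟩
    · exact hinj _ _ (by omega) (by omega) (a.symm.trans c)
    · have h1 := hinj _ _ (by omega) (by omega) (a.symm.trans c)
      have h2 := hinj _ _ (by omega) (by omega) (b.symm.trans d)
      omega
    · have h1 := hinj _ _ (by omega) (by omega) (a.symm.trans c)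
      have h2 := hinj _ _ (by omega) (by omega) (b.symm.trans d)
      omega
    · exact hinj _ _ (by omega) (by omega) (b.symm.trans d)
  let w : Fin (p.length + 2) → G.V :=
    Fin.snoc (α := fun _ => G.V) (fun i : Fin (p.length + 1) => p.getVert i) (G.t e₀)
  let c : Fin (p.length + 1) → G.E := Fin.snoc (α := fun _ => G.E) g e₀
  have hw : ∀ i : Fin (p.length + 1), w i.castSucc = p.getVert i := fun i => by simp [w]
  have hwlast : w (Fin.last _) = G.t e₀ := by simp [w]
  have hw0 : w 0 = G.t e₀ := by
    have := hw 0
    simpa using this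
  refine ⟨Finset.image c Finset.univ,
    ⟨p.length + 1, Nat.succ_pos _, c, w, ?_, ?_, hw0.trans hwlast.symm, ?_, rfl⟩, ?_, ?_⟩
  · intro i j hij
    induction i using Fin.lastCases with
    | last =>
      induction j using Fin.lastCases with
      | last => rfl
      | cast j => exact absurd (by simpa [c] using hij.symm) (hg₀ j)
    | cast i =>
      induction j using Fin.lastCases with
      | last => exact absurd (by simpa [c] using hij) (hg₀ i)
      | cast j =>
        have hij' : g i = g j := by simpa [c] using hij
        rw [hginj hij']
  · intro i
    induction i using Fin.lastCases with
    | last =>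
      left
      rw [hw, Fin.succ_last, hwlast]
      simp [c]
    | cast i =>
      rw [hw, ← Fin.castSucc_succ, hw]
      simpa [c] using hg i
  · intro i j hij
    induction i using Fin.lastCases with
    | last =>
      induction j using Fin.lastCases with
      | last => exact Or.inl rfl
      | cast j =>
        rw [hwlast, hw] at hij
        have := hinj 0 j (by omega) (by omega) (by simpa using hij)
        exact Or.inr (Or.inr ⟨rfl, Fin.ext this.symm⟩)
    | cast i =>
      induction j using Fin.lastCases with
      | last =>
        rw [hwlast, hw] at hij
        have := hinj 0 i (by omega) (by omega) (by simpa using hij.symm)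
        exact Or.inr (Or.inl ⟨Fin.ext this.symm, rfl⟩)
      | cast j =>
        rw [hw, hw] at hij
        exact Or.inl (congrArg _ (Fin.ext (hinj _ _ (by omega) (by omega) hij)))
  · exact Finset.mem_image.mpr ⟨Fin.last _, Finset.mem_univ _, by simp [c]⟩
  · intro e he
    obtain ⟨i, -, rfl⟩ := Finset.mem_image.mp he
    induction i using Fin.lastCases with
    | last => simpa [c] using he₀
    | cast i => simpa [c] using hgx i

/-- A simple cycle supports an integral cycle whose coefficients on it are `±1`. -/
theorem IsCycle.exists_mem_cycleSpace {C : Finset G.E} (hC : G.IsCycle C) :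
    ∃ y ∈ G.cycleSpace, ∀ e ∈ C, y e = 1 ∨ y e = -1 := by
  classical
  obtain ⟨n, -, c, w, hinj, hinc, hclosed, -, rfl⟩ := hC
  have hsign : ∀ i, ∃ a : ℤ, (a = 1 ∨ a = -1) ∧ ∀ f : G.V → ℤ,
      a * (f (G.t (c i)) - f (G.s (c i))) = f (w i.succ) - f (w i.castSucc) := by
    intro i
    rcases hinc i with ⟨h1, h2⟩ | ⟨h1, h2⟩
    · exact ⟨1, Or.inl rfl, fun f => by rw [h1, h2]; ring⟩
    · exact ⟨-1, Or.inr rfl, fun f => by rw [h1, h2]; ring⟩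
  choose a ha hf using hsign
  refine ⟨fun e => ∑ i, if c i = e then a i else 0, mem_cycleSpace_of_forall fun f => ?_, ?_⟩
  · simp only [Finset.sum_mul, ite_mul, zero_mul]
    rw [Finset.sum_comm]
    simp only [Finset.sum_ite_eq, Finset.mem_univ, if_true, hf]
    rw [Finset.sum_sub_distrib]
    have h1 := Fin.sum_univ_succ fun i => f (w i)
    have h2 := Fin.sum_univ_castSucc fun i => f (w i)
    rw [hclosed] at h1
    linarith
  · intro e he
    obtain ⟨i, -, rfl⟩ := Finset.mem_image.mp he
    simpa [hinj.eq_iff] using ha i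

theorem Sim.symm {e e' : G.E} (h : G.Sim e e') : G.Sim e' e := fun C hC => (h C hC).symm

theorem Sim.trans {e e' e'' : G.E} (h : G.Sim e e') (h' : G.Sim e' e'') : G.Sim e e'' :=
  fun C hC => (h C hC).trans (h' C hC)

theorem Sim.eq_zero {e e' : G.E} (h : G.Sim e e') {x : G.E → ℤ} (hx : x ∈ G.cycleSpace)
    (hxe : x e = 0) : x e' = 0 := by
  by_contra hne
  obtain ⟨C, hC, he', hsupp⟩ := exists_isCycle_of_ne_zero hx hne
  exact hsupp e ((h C hC).mpr he') hxe

/-- On the cycle space, the coordinates of edges in the same C1-set agree up to a sign. -/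
theorem Sim.exists_sign {e e' : G.E} (h : G.Sim e e') :
    ∃ a : ℤ, (a = 1 ∨ a = -1) ∧ ∀ x ∈ G.cycleSpace, x e' = a * x e := by
  by_cases hb : G.IsBridge e
  · have hzero : ∀ x ∈ G.cycleSpace, x e = 0 := fun x hx => by
      by_contra hne
      obtain ⟨C, hC, he, -⟩ := exists_isCycle_of_ne_zero hx hne
      exact hb C hC he
    exact ⟨1, Or.inl rfl, fun x hx => by rw [h.eq_zero hx (hzero x hx), hzero x hx, mul_zero]⟩
  · simp only [IsBridge, not_forall, not_not] at hb
    obtain ⟨C, hC, he⟩ := hb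
    obtain ⟨y, hy, hyC⟩ := hC.exists_mem_cycleSpace
    have hye := hyC e he
    have hye' := hyC e' ((h C hC).mp he)
    have hsq : y e * y e = 1 := by rcases hye with h | h <;> simp [h]
    refine ⟨y e * y e', ?_, fun x hx => ?_⟩
    · rcases hye with h | h <;> rcases hye' with h' | h' <;> simp [h, h']
    · have hz := h.eq_zero (G.cycleSpace.sub_mem hx (G.cycleSpace.zsmul_mem hy (y e * x e)))
        (by simp only [Pi.sub_apply, Pi.smul_apply, smul_eq_mul]
            linear_combination (-x e) * hsq)
      simp only [Pi.sub_apply, Pi.smul_apply, smul_eq_mul] at hz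
      linear_combination hz

/-- The cycle space of a contraction is the restriction of the cycle space to the surviving
edges. -/
theorem mem_cycleSpace_contractSet {F : Set G.E} {y : (G.contractSet F).E → ℤ} :
    y ∈ (G.contractSet F).cycleSpace ↔
      ∃ x ∈ G.cycleSpace, ∀ e : (G.contractSet F).E, y e = x e.1 := by
  classical
  have hsum : ∀ {A : Type} [AddCommGroup A] (x : G.E → ℤ)
      (f : (G.contractSet F).V → A),
      ∑ e : (G.contractSet F).E,
        x e.1 • (f ((G.contractSet F).t e) - f ((G.contractSet F).s e)) =
      ∑ e, x e • (f (Quot.mk _ (G.t e)) - f (Quot.mk _ (G.s e))) := by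
    intro A _ x f
    refine Finset.sum_of_injOn Subtype.val Subtype.val_injective.injOn
      (fun _ _ => Finset.mem_coe.mpr (Finset.mem_univ _)) ?_
      fun _ _ => rfl
    intro e _ he
    have heF : e ∈ F := by
      by_contra hn
      exact he ⟨⟨e, hn⟩, Finset.mem_coe.mpr (Finset.mem_univ _), rfl⟩
    have hq : (Quot.mk _ (G.s e) : (G.contractSet F).V) = Quot.mk _ (G.t e) :=
      Quot.sound ⟨e, heF, rfl, rfl⟩
    rw [hq, sub_self, smul_zero]
  constructor
  · intro hy
    let K : AddSubgroup (G.E → ℤ) :=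
      { carrier := {z | ∀ e, e ∉ F → z e = 0}
        zero_mem' := fun _ _ => rfl
        add_mem' := fun ha hb e he => by simp [ha e he, hb e he]
        neg_mem' := fun ha e he => by simp [ha e he] }
    let B : AddSubgroup (G.V → ℤ) := K.map G.boundaryHom
    have hbd : ∀ e, G.boundaryHom (Pi.single e 1) =
        Pi.single (G.t e) 1 - Pi.single (G.s e) 1 := by
      intro e
      funext v
      simp [boundaryHom, Pi.single_apply, eq_comm]
    let f : (G.contractSet F).V → (G.V → ℤ) ⧸ B :=
      Quot.lift (fun v => QuotientAddGroup.mk (Pi.single v 1)) (by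
        rintro _ _ ⟨e, he, rfl, rfl⟩
        refine QuotientAddGroup.eq.mpr ⟨Pi.single e 1, fun e' he' => ?_, ?_⟩
        · rw [Pi.single_eq_of_ne]
          rintro rfl
          exact he' he
        · rw [hbd]; abel)
    let x : G.E → ℤ := fun e => if he : e ∉ F then y ⟨e, he⟩ else 0
    have hx : ∀ e : (G.contractSet F).E, y e = x e.1 := fun e => by
      have he : e.1 ∉ F := e.2
      simp only [x, dif_pos he]
      rfl
    have h0 := sum_smul_sub_eq_zero hy f
    rw [Finset.sum_congr rfl fun e _ => by rw [hx e], hsum] at h0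
    have hxsum : G.boundaryHom x = ∑ e, x e • G.boundaryHom (Pi.single e 1) := by
      simp only [← map_zsmul, ← map_sum]
      congr 1
      funext e
      simp [Finset.sum_apply, Pi.single_apply]
    have hmem : G.boundaryHom x ∈ B := by
      rw [← QuotientAddGroup.eq_zero_iff, ← h0, hxsum]
      simp only [hbd]
      exact map_sum (QuotientAddGroup.mk' B) _ _
    obtain ⟨z, hz, hzx⟩ := hmem
    refine ⟨x - z, AddMonoidHom.mem_ker.mpr (by rw [map_sub, hzx, sub_self]), fun e => ?_⟩
    rw [Pi.sub_apply, hz e.1 e.2, sub_zero, hx]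
  · rintro ⟨x, hx, hxy⟩
    refine mem_cycleSpace_of_forall fun f => ?_
    rw [Finset.sum_congr rfl fun e _ => by rw [hxy e]]
    exact (hsum x f).trans (sum_smul_sub_eq_zero hx fun v => f (Quot.mk _ v))

end Multigraph

namespace IsC1Choice

variable {H : Multigraph} {c c₁ c₂ : H.E → H.E}

theorem apply_eq_iff (h : IsC1Choice H c) {e e' : H.E} : c e = c e' ↔ H.Sim e e' :=
  ⟨fun he => (h.1 e).trans (he ▸ (h.1 e').symm), h.2 e e'⟩

theorem apply_apply (h₁ : IsC1Choice H c₁) (h₂ : IsC1Choice H c₂) (e : H.E) :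
    c₁ (c₂ e) = c₁ e :=
  h₁.2 _ _ (h₂.1 e).symm

theorem apply_of_mem_threeGraph (e : (threeGraph H c).E) : c e.1 = e.1 := not_not.mp e.2

/-- The surviving edges of two choices correspond through their common C1-sets. -/
def edgeEquiv (h₁ : IsC1Choice H c₁) (h₂ : IsC1Choice H c₂) :
    (threeGraph H c₁).E ≃ (threeGraph H c₂).E where
  toFun e := ⟨c₂ e.1, not_not.mpr (h₂.apply_apply h₂ _)⟩
  invFun e := ⟨c₁ e.1, not_not.mpr (h₁.apply_apply h₁ _)⟩
  left_inv e := Subtype.ext ((h₁.apply_apply h₂ _).trans (apply_of_mem_threeGraph e))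
  right_inv e := Subtype.ext ((h₂.apply_apply h₁ _).trans (apply_of_mem_threeGraph e))

/-- The metric graphs produced by two choices of representatives are cyclically equivalent. -/
theorem metricCycEquiv (h₁ : IsC1Choice H c₁) (h₂ : IsC1Choice H c₂) (ℓ : H.E → ℝ) :
    MetricCycEquiv (threeGraph H c₁) (threeLength H ℓ c₁)
      (threeGraph H c₂) (threeLength H ℓ c₂) := by
  choose a ha hax using fun e => (h₂.1 e).exists_sign
  refine ⟨h₁.edgeEquiv h₂, fun e => a e.1, fun e => ?_, fun e => ha e.1, ?_⟩
  · refine Finset.sum_congr (Finset.filter_congr fun e' _ => ?_) fun _ _ => rfl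
    change c₂ e' = c₂ e.1 ↔ c₁ e' = e.1
    rw [h₂.apply_eq_iff, ← h₁.apply_eq_iff, apply_of_mem_threeGraph e]
  · have hval : ∀ x ∈ H.cycleSpace, ∀ e : (threeGraph H c₂).E,
        a (c₁ e.1) * x (c₁ e.1) = x e.1 := fun x hx e => by
      rw [← hax _ x hx, h₂.apply_apply h₁, apply_of_mem_threeGraph e]
    ext y
    simp only [Set.mem_image, SetLike.mem_coe]
    constructor
    · rintro ⟨z, hz, rfl⟩
      obtain ⟨x, hx, hxz⟩ := Multigraph.mem_cycleSpace_contractSet.mp hz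
      refine Multigraph.mem_cycleSpace_contractSet.mpr ⟨x, hx, fun e => ?_⟩
      exact (congrArg (a (c₁ e.1) * ·) (hxz _)).trans (hval x hx e)
    · intro hy
      obtain ⟨x, hx, hxy⟩ := Multigraph.mem_cycleSpace_contractSet.mp hy
      refine ⟨fun e => x e.1,
        Multigraph.mem_cycleSpace_contractSet.mpr ⟨x, hx, fun _ => rfl⟩, ?_⟩
      funext e
      exact (hval x hx e).trans (hxy e).symm

end IsC1Choice

/-- The cyclic equivalence class of `Γ^(3)` is uniquely determined by `Γ`:
any two tropical curves obtained from `Γ` by the `Γ^(3)`-construction (with possibly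
different choices of surviving edges in the C1-sets) are cyclically equivalent. -/
theorem three_construction_well_defined (Γ : TropicalCurve) (h : Γ.G.Connected)
    (c₁ c₂ : Γ.G.contractBridges.E → Γ.G.contractBridges.E)
    (h₁ : IsC1Choice Γ.G.contractBridges c₁) (h₂ : IsC1Choice Γ.G.contractBridges c₂) :
    MetricCycEquiv
      (threeGraph Γ.G.contractBridges c₁)
      (threeLength Γ.G.contractBridges (fun e => Γ.ℓ e.1) c₁)
      (threeGraph Γ.G.contractBridges c₂)
      (threeLength Γ.G.contractBridges (fun e => Γ.ℓ e.1) c₂) := by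
  exact h₁.metricCycEquiv h₂ _
end
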